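/- Fix real numbers q and s with 0 < q < 1 and 0 < s < 1 and set t = s². For all integers m, n ≥ 0, the q-Gauss integral formula for Rogers polynomials of type A₁ holds: (1/2π) ∫₀^{2π} P_m(e^{iφ}; q, t) · P_n(e^{iφ}; q, t) · θ(e^{iφ}) · μ(e^{iφ}; q, t) dφ = q^{(m² + n²)/4} · s^{m+n} · P_n(s q^{m/2}; q, t) · P_m(s; q, t) · ∏_{j=1}^∞ (1 − t qʲ)/(1 − t² qʲ). (Formula (3.4) of the paper in the rank-one case.) -/

import Mathlib

open scoped BigOperators
open Filter

noncomputable section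

/-- Symmetric monomial `M_r(X) = X^r + X^{-r}` for `r ≥ 1`, `M_0 = 1`. -/
def Msym (r : ℕ) (X : ℂ) : ℂ := if r = 0 then 1 else X ^ r + X⁻¹ ^ r

/-- Continuous q-Hermite Laurent polynomial (Macdonald polynomial of type A₁ at t = 0). -/
def PbarA1 (q : ℝ) (n : ℕ) (X : ℂ) : ℂ :=
  Msym n X + ∑ j ∈ Finset.Icc 1 (n / 2),
    (∏ i ∈ Finset.range j, (1 - (q : ℂ) ^ (n - i)) / (1 - (q : ℂ) ^ (i + 1))) *
      Msym (n - 2 * j) X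

/-- Global q-Whittaker function of type A₁. -/
def whitA1 (q : ℝ) (X Λ : ℂ) : ℂ :=
  ∑' n : ℕ, ((q ^ ((n : ℝ) ^ 2 / 4) : ℝ) : ℂ) * X ^ n * PbarA1 q n Λ /
    ∏ j ∈ Finset.Icc 1 n, (1 - (q : ℂ) ^ j)

/-- Theta function `θ(Λ) = ∑_{j ∈ ℤ} q^{j²/4} Λ^j`. -/
def thetaA1 (q : ℝ) (Λ : ℂ) : ℂ :=
  ∑' j : ℤ, ((q ^ ((j : ℝ) ^ 2 / 4) : ℝ) : ℂ) * Λ ^ j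

/-- Rogers Laurent polynomial (symmetric Macdonald polynomial of type A₁). -/
def RogersA1 (q : ℝ) (t : ℂ) (n : ℕ) (X : ℂ) : ℂ :=
  Msym n X + ∑ j ∈ Finset.Icc 1 (n / 2),
    (∏ i ∈ Finset.range j,
      ((1 - (q : ℂ) ^ (n - i)) * (1 - t * (q : ℂ) ^ i)) /
      ((1 - (q : ℂ) ^ (1 + i)) * (1 - t * (q : ℂ) ^ (n - i - 1)))) *
    Msym (n - 2 * j) X

/-- Global q,t-spherical function of type A₁, with `t = s²`. -/
def sphA1 (q s : ℝ) (X Λ : ℂ) : ℂ :=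
  ∑' n : ℕ, (s : ℂ) ^ n * ((q ^ ((n : ℝ) ^ 2 / 4) : ℝ) : ℂ) *
    RogersA1 q ((s : ℂ) ^ 2) n X * RogersA1 q ((s : ℂ) ^ 2) n Λ *
    ∏ i ∈ Finset.range n,
      ((1 - (s : ℂ) ^ 2 * (q : ℂ) ^ i) * (1 - (s : ℂ) ^ 2 * (q : ℂ) ^ (i + 1))) /
      ((1 - ((s : ℂ) ^ 2) ^ 2 * (q : ℂ) ^ i) * (1 - (q : ℂ) ^ (i + 1)))

/-- Macdonald truncated theta weight function of type A₁. -/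
def muA1 (q : ℝ) (t : ℂ) (X : ℂ) : ℂ :=
  ∏' j : ℕ, ((1 - X ^ 2 * (q : ℂ) ^ j) * (1 - X⁻¹ ^ 2 * (q : ℂ) ^ (j + 1))) /
    ((1 - t * X ^ 2 * (q : ℂ) ^ j) * (1 - t * X⁻¹ ^ 2 * (q : ℂ) ^ (j + 1)))

/-- The ratio `(t; q)_k / (q; q)_k`. -/
def rogersWeight (q t : ℂ) (k : ℕ) : ℂ :=
  ∏ i ∈ Finset.range k, (1 - t * q ^ i) / (1 - q ^ (i + 1))

lemma rogersWeight_zero (q t : ℂ) : rogersWeight q t 0 = 1 := by simp [rogersWeight]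

lemma rogersWeight_succ {q : ℂ} (hq : ∀ i : ℕ, 1 - q ^ (i + 1) ≠ 0) (t : ℂ) (k : ℕ) :
    (1 - q ^ (k + 1)) * rogersWeight q t (k + 1) = (1 - t * q ^ k) * rogersWeight q t k := by
  have := hq k
  rw [rogersWeight, Finset.prod_range_succ, ← rogersWeight]
  field_simp

lemma rogersWeight_ne_zero {q t : ℂ} (hq : ∀ i : ℕ, 1 - q ^ (i + 1) ≠ 0)
    (ht : ∀ i : ℕ, 1 - t * q ^ i ≠ 0) (k : ℕ) : rogersWeight q t k ≠ 0 :=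
  Finset.prod_ne_zero_iff.2 fun i _ => div_ne_zero (ht i) (hq i)

lemma rogers_coeff_mul_weight {q t : ℂ} (hq : ∀ i : ℕ, 1 - q ^ (i + 1) ≠ 0)
    (ht : ∀ i : ℕ, 1 - t * q ^ i ≠ 0) (n j : ℕ) (hj : j ≤ n) :
    (∏ i ∈ Finset.range j, ((1 - q ^ (n - i)) * (1 - t * q ^ i)) /
      ((1 - q ^ (1 + i)) * (1 - t * q ^ (n - i - 1)))) * rogersWeight q t n =
    rogersWeight q t j * rogersWeight q t (n - j) := by
  induction j with
  | zero => simp [rogersWeight_zero]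
  | succ j ih =>
    obtain ⟨k, rfl⟩ : ∃ k, n = j + 1 + k := ⟨n - (j + 1), by omega⟩
    have e1 : j + 1 + k - j = k + 1 := by omega
    have e2 : j + 1 + k - (j + 1) = k := by omega
    have e3 : k + 1 - 1 = k := by omega
    have e4 : 1 + j = j + 1 := by omega
    specialize ih (by omega)
    rw [e1] at ih
    rw [Finset.prod_range_succ, mul_right_comm, ih, e1, e2, e3, e4]
    have h1 := rogersWeight_succ hq t j
    have h2 := rogersWeight_succ hq t k
    have := hq j
    have := ht k
    field_simp
    linear_combination rogersWeight q t j * (1 - t * q ^ j) * h2 -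
      rogersWeight q t k * (1 - t * q ^ k) * h1

lemma sum_pow_eq_sum_Msym {X : ℂ} (hX : X ≠ 0) (n : ℕ) (c : ℕ → ℂ)
    (hc : ∀ j ≤ n, c (n - j) = c j) :
    ∑ j ∈ Finset.range (n + 1), c j * (X ^ j * X⁻¹ ^ (n - j)) =
      ∑ j ∈ Finset.range (n / 2 + 1), c j * Msym (n - 2 * j) X := by
  induction n using Nat.twoStepInduction generalizing c with
  | zero => simp [Msym]
  | one =>
    have := hc 0 (by omega)
    simp only [Nat.sub_zero] at this
    simp [Finset.sum_range_succ, Msym, this]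
    ring
  | more n ih _ =>
    have h2 : (n + 2) / 2 + 1 = n / 2 + 1 + 1 := by omega
    rw [Finset.sum_range_succ, Finset.sum_range_succ' _ (n + 1), h2,
      Finset.sum_range_succ' _ (n / 2 + 1)]
    have key := ih (fun j => c (j + 1)) (fun j hj => by
      have := hc (j + 1) (by omega)
      rw [← this]
      congr 1
      omega)
    have hl : ∑ j ∈ Finset.range (n + 1), c (j + 1) * (X ^ (j + 1) * X⁻¹ ^ (n + 2 - (j + 1))) =
        ∑ j ∈ Finset.range (n + 1), c (j + 1) * (X ^ j * X⁻¹ ^ (n - j)) := by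
      refine Finset.sum_congr rfl fun j hj => ?_
      have hj' : n + 2 - (j + 1) = n - j + 1 := by
        have := Finset.mem_range.1 hj
        omega
      rw [hj', pow_succ, pow_succ]
      field_simp
    have hr : ∑ j ∈ Finset.range (n / 2 + 1), c (j + 1) * Msym (n + 2 - 2 * (j + 1)) X =
        ∑ j ∈ Finset.range (n / 2 + 1), c (j + 1) * Msym (n - 2 * j) X := by
      refine Finset.sum_congr rfl fun j _ => ?_
      congr 2
      omega
    have h0 := hc 0 (by omega)
    rw [hl, hr, key]
    simp only [Nat.sub_zero] at h0
    simp [Msym, h0]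
    ring

/-- The Rogers polynomials in terms of their generating function coefficients. -/
def rogersSum (q t : ℂ) (n : ℕ) (X Y : ℂ) : ℂ :=
  ∑ p ∈ Finset.HasAntidiagonal.antidiagonal n,
    rogersWeight q t p.1 * rogersWeight q t p.2 * (X ^ p.1 * Y ^ p.2)

lemma RogersA1_mul_weight {q : ℝ} {t : ℂ} (hq : ∀ i : ℕ, 1 - (q : ℂ) ^ (i + 1) ≠ 0)
    (ht : ∀ i : ℕ, 1 - t * (q : ℂ) ^ i ≠ 0) (n : ℕ) {X : ℂ} (hX : X ≠ 0) :
    RogersA1 q t n X * rogersWeight q t n = rogersSum q t n X X⁻¹ := by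
  have h := sum_pow_eq_sum_Msym hX n
    (fun j => rogersWeight q t j * rogersWeight q t (n - j))
    (fun j hj => by simp only [Nat.sub_sub_self hj, mul_comm])
  rw [rogersSum, Finset.Nat.sum_antidiagonal_eq_sum_range_succ_mk, h, RogersA1,
    Finset.sum_range_succ', add_comm, add_mul, Finset.sum_mul]
  congr 1
  · rw [Finset.range_eq_Ico, Finset.sum_Ico_add' (fun j => rogersWeight q t j *
      rogersWeight q t (n - j) * Msym (n - 2 * j) X) 0 (n / 2) 1]
    refine Finset.sum_congr rfl fun j hj => ?_
    rw [mul_right_comm, rogers_coeff_mul_weight hq ht n j]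
    have := Finset.mem_Icc.1 hj
    omega
  · simp [rogersWeight_zero, mul_comm]

lemma rogersSum_recurrence {q : ℂ} (hq : ∀ i : ℕ, 1 - q ^ (i + 1) ≠ 0) (t : ℂ) (n : ℕ)
    (X Y : ℂ) :
    (1 - q ^ (n + 2)) * rogersSum q t (n + 2) X Y =
      (X + Y) * (1 - t * q ^ (n + 1)) * rogersSum q t (n + 1) X Y -
        X * Y * (1 - t ^ 2 * q ^ n) * rogersSum q t n X Y := by
  let R : ℕ → ℂ := fun n => ∑ p ∈ Finset.HasAntidiagonal.antidiagonal n,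
    rogersWeight q t p.1 * rogersWeight q t p.2 * ((q * X) ^ p.1 * Y ^ p.2)
  have h1 (n : ℕ) : rogersSum q t (n + 1) X Y - R (n + 1) =
      X * (rogersSum q t n X Y - t * R n) := by
    simp only [rogersSum, R, Finset.mul_sum, ← Finset.sum_sub_distrib]
    rw [Finset.Nat.sum_antidiagonal_succ]
    simp only [pow_zero, sub_self, zero_add]
    refine Finset.sum_congr rfl fun p _ => ?_
    have := rogersWeight_succ hq t p.1
    simp only [mul_pow]
    linear_combination rogersWeight q t p.2 * X ^ (p.1 + 1) * Y ^ p.2 * this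
  have h2 (n : ℕ) : R (n + 1) - q ^ (n + 1) * rogersSum q t (n + 1) X Y =
      Y * (R n - t * q ^ n * rogersSum q t n X Y) := by
    simp only [rogersSum, R, Finset.mul_sum, ← Finset.sum_sub_distrib]
    rw [Finset.Nat.sum_antidiagonal_succ']
    have h0 : rogersWeight q t (n + 1) * rogersWeight q t 0 * ((q * X) ^ (n + 1) * Y ^ 0) -
        q ^ (n + 1) * (rogersWeight q t (n + 1) * rogersWeight q t 0 * (X ^ (n + 1) * Y ^ 0)) =
        0 := by
      rw [mul_pow]
      ring
    simp only [h0, zero_add]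
    refine Finset.sum_congr rfl fun p hp => ?_
    have := rogersWeight_succ hq t p.2
    have hn : n = p.1 + p.2 := (Finset.HasAntidiagonal.mem_antidiagonal.1 hp).symm
    simp only [mul_pow, hn]
    linear_combination rogersWeight q t p.1 * X ^ p.1 * Y ^ (p.2 + 1) * q ^ p.1 * this
  linear_combination h1 (n + 1) + h2 (n + 1) - Y * h1 n - t * X * h2 n

lemma RogersA1_zero (q : ℝ) (t X : ℂ) : RogersA1 q t 0 X = 1 := by simp [RogersA1, Msym]

lemma RogersA1_one (q : ℝ) (t X : ℂ) : RogersA1 q t 1 X = X + X⁻¹ := by simp [RogersA1, Msym]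

/-- Recurrence coefficients of the Rogers polynomials. -/
def rogersGamma (q t : ℂ) (n : ℕ) : ℂ :=
  (1 - q ^ n) * (1 - t ^ 2 * q ^ (n - 1)) / ((1 - t * q ^ (n - 1)) * (1 - t * q ^ n))

lemma rogersGamma_zero (q t : ℂ) : rogersGamma q t 0 = 0 := by simp [rogersGamma]

lemma RogersA1_recurrence {q : ℝ} {t : ℂ} (hq : ∀ i : ℕ, 1 - (q : ℂ) ^ (i + 1) ≠ 0)
    (ht : ∀ i : ℕ, 1 - t * (q : ℂ) ^ i ≠ 0) (n : ℕ) {X : ℂ} (hX : X ≠ 0) :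
    (X + X⁻¹) * RogersA1 q t n X =
      RogersA1 q t (n + 1) X + rogersGamma q t n * RogersA1 q t (n - 1) X := by
  rcases n with _ | n
  · simp [rogersGamma_zero, RogersA1_zero, RogersA1_one]
  have h := rogersSum_recurrence hq t n X X⁻¹
  rw [← RogersA1_mul_weight hq ht _ hX, ← RogersA1_mul_weight hq ht _ hX,
    ← RogersA1_mul_weight hq ht _ hX, mul_inv_cancel₀ hX] at h
  have w1 := rogersWeight_succ hq t n
  have w2 := rogersWeight_succ hq t (n + 1)
  have hw := rogersWeight_ne_zero hq ht n
  have hw1 : rogersWeight q t (n + 1) = (1 - t * (q : ℂ) ^ n) * rogersWeight q t n /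
      (1 - (q : ℂ) ^ (n + 1)) := by
    rw [eq_div_iff (hq n), mul_comm, w1]
  have e1 := hq n
  have e2 := hq (n + 1)
  have e3 := ht n
  have e4 := ht (n + 1)
  have h' : (1 - (q : ℂ) ^ (n + 2)) * (RogersA1 q t (n + 2) X * rogersWeight q t (n + 2)) =
      RogersA1 q t (n + 2) X * ((1 - t * (q : ℂ) ^ (n + 1)) * rogersWeight q t (n + 1)) := by
    rw [← w2]; ring
  rw [h', hw1] at h
  simp only [rogersGamma, Nat.add_sub_cancel]
  have hprod : (1 - t * (q : ℂ) ^ n) * (1 - t * (q : ℂ) ^ (n + 1)) * rogersWeight q t n ≠ 0 := by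
    simp [e3, e4, hw]
  apply mul_left_cancel₀ hprod
  field_simp at h ⊢
  linear_combination -h

lemma rogersGamma_relation {q t r : ℂ} (ht : ∀ i : ℕ, 1 - t * q ^ i ≠ 0) (hr : r ^ 2 = q)
    (hr0 : r ≠ 0) (n : ℕ) :
    rogersGamma q t (n + 2) * (r⁻¹ ^ (n + 2) - t * r ^ (n + 2)) =
      rogersGamma q t (n + 1) * (r⁻¹ ^ n - t * r ^ n) -
        (r - r⁻¹) * (t * r ^ (n + 1) + r⁻¹ ^ (n + 1)) := by
  have h0 := ht n
  have h1 := ht (n + 1)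
  have h2 := ht (n + 2)
  have hn : q ^ n = (r ^ n) ^ 2 := by rw [← hr]; ring
  have hu : r ^ n ≠ 0 := pow_ne_zero _ hr0
  have e1 : n + 1 - 1 = n := rfl
  have e2 : n + 2 - 1 = n + 1 := rfl
  simp only [rogersGamma, e1, e2, pow_add, hn, inv_pow, pow_one] at h0 h1 h2 ⊢
  generalize r ^ n = u at *
  subst hr
  obtain ⟨d0, hd0⟩ : ∃ d, d = 1 - t * u ^ 2 := ⟨_, rfl⟩
  obtain ⟨d1, hd1⟩ : ∃ d, d = 1 - t * (u ^ 2 * r ^ 2) := ⟨_, rfl⟩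
  obtain ⟨d2, hd2⟩ : ∃ d, d = 1 - t * (u ^ 2 * (r ^ 2) ^ 2) := ⟨_, rfl⟩
  rw [← hd0] at h0
  rw [← hd1] at h1
  rw [← hd2] at h2
  rw [← hd0, ← hd1, ← hd2]
  field_simp
  rw [hd0, hd1, hd2]
  ring

/-- The Rogers polynomials are eigenfunctions of the Macdonald operator, together with the action
of the companion operator obtained from its commutator with `X + X⁻¹`. -/
lemma RogersA1_macdonald {q : ℝ} {t r : ℂ} (hq : ∀ i : ℕ, 1 - (q : ℂ) ^ (i + 1) ≠ 0)
    (ht : ∀ i : ℕ, 1 - t * (q : ℂ) ^ i ≠ 0) (hr : r ^ 2 = (q : ℂ)) (hr0 : r ≠ 0) (n : ℕ) {X : ℂ}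
    (hX : X ≠ 0) :
    (X ^ 2 - 1) * ((t * r ^ n + r⁻¹ ^ n) * RogersA1 q t n X) =
      (X ^ 2 - t) * RogersA1 q t n (X / r) + (t * X ^ 2 - 1) * RogersA1 q t n (r * X) ∧
    (X ^ 2 - 1) * (t * r ^ n * RogersA1 q t (n + 1) X +
        rogersGamma q t n * r⁻¹ ^ n * RogersA1 q t (n - 1) X) =
      X⁻¹ * (X ^ 2 - t) * RogersA1 q t n (X / r) +
        X * (t * X ^ 2 - 1) * RogersA1 q t n (r * X) := by
  induction n using Nat.twoStepInduction with
  | zero =>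
    constructor
    · simp [RogersA1_zero]; ring
    · simp [RogersA1_zero, RogersA1_one, rogersGamma_zero]
      field_simp
      ring
  | one =>
    have h3 := RogersA1_recurrence hq ht 1 hX
    simp only [RogersA1_one, RogersA1_zero, Nat.sub_self] at h3
    have h0 := ht 0
    have h1 := ht 1
    simp only [pow_zero, mul_one, pow_one] at h0 h1
    constructor
    · simp only [RogersA1_one]
      field_simp
      ring
    · have hg : rogersGamma q t 1 = (1 - r ^ 2) * (1 + t) / (1 - t * r ^ 2) := by
        simp only [rogersGamma, Nat.sub_self, pow_zero, mul_one, pow_one]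
        rw [← hr] at h1 ⊢
        field_simp
        ring
      have h2 : RogersA1 q t (1 + 1) X = (X + X⁻¹) * (X + X⁻¹) - rogersGamma q t 1 := by
        linear_combination -h3
      simp only [h2, hg, RogersA1_one, RogersA1_zero, Nat.sub_self]
      rw [← hr] at h1
      field_simp
      ring
  | more n ih0 ih1 =>
    obtain ⟨hE0, hA0⟩ := ih0
    obtain ⟨hE1, hA1⟩ := ih1
    have hXr : X / r ≠ 0 := div_ne_zero hX hr0
    have hrX : r * X ≠ 0 := mul_ne_zero hr0 hX
    have t0 := RogersA1_recurrence hq ht n hX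
    have t1 := RogersA1_recurrence hq ht (n + 1) hX
    have t2 := RogersA1_recurrence hq ht (n + 2) hX
    have f1 := RogersA1_recurrence hq ht (n + 1) hXr
    have g1 := RogersA1_recurrence hq ht (n + 1) hrX
    have hg := rogersGamma_relation ht hr hr0 n
    have e1 : n + 1 - 1 = n := rfl
    have e2 : n + 2 - 1 = n + 1 := rfl
    have e3 : n + 1 + 1 = n + 2 := rfl
    have hu : r ^ n ≠ 0 := pow_ne_zero _ hr0
    simp only [e1, e2, e3, pow_succ, inv_pow] at *
    generalize RogersA1 q t n X = P0 at *
    generalize RogersA1 q t (n - 1) X = Pm at *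
    generalize RogersA1 q t (n + 1) X = P1 at *
    generalize RogersA1 q t (n + 2) X = P2 at *
    generalize RogersA1 q t (n + 2 + 1) X = P3 at *
    generalize RogersA1 q t n (X / r) = F0 at *
    generalize RogersA1 q t (n + 1) (X / r) = F1 at *
    generalize RogersA1 q t (n + 2) (X / r) = F2 at *
    generalize RogersA1 q t n (r * X) = G0 at *
    generalize RogersA1 q t (n + 1) (r * X) = G1 at *
    generalize RogersA1 q t (n + 2) (r * X) = G2 at *
    generalize rogersGamma q t n = a0 at *
    generalize rogersGamma q t (n + 1) = a1 at *
    generalize rogersGamma q t (n + 2) = a2 at *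
    generalize r ^ n = u at *
    constructor
    · linear_combination (norm := skip) (r - r⁻¹) * hA1 + r⁻¹ * (X + X⁻¹) * hE1 - a1 * hE0 +
        (X ^ 2 - t) * f1 + (t * X ^ 2 - 1) * g1 - r⁻¹ * (X ^ 2 - 1) * (t * (u * r) + (u * r)⁻¹) * t1
      field_simp
      ring
    · linear_combination (norm := skip) r * (X + X⁻¹) * hA1 - (r - r⁻¹) * hE1 - a1 * hA0 +
        X⁻¹ * (X ^ 2 - t) * f1 + X * (t * X ^ 2 - 1) * g1 + (X ^ 2 - 1) * P1 * hg -
        (X ^ 2 - 1) * t * (u * r * r) * t2 - (X ^ 2 - 1) * a1 * u⁻¹ * t0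
      field_simp
      ring

/-- Evaluation of the Rogers polynomials at `s`, where `t = s²`, as a ratio of neighbours. -/
lemma RogersA1_eval_succ {q : ℝ} {s t : ℂ} (hq : ∀ i : ℕ, 1 - (q : ℂ) ^ (i + 1) ≠ 0)
    (ht : ∀ i : ℕ, 1 - t * (q : ℂ) ^ i ≠ 0) (hs : s ≠ 0) (hst : s ^ 2 = t) (n : ℕ) :
    s * (1 - t * (q : ℂ) ^ n) * RogersA1 q t (n + 1) s =
      (1 - t ^ 2 * (q : ℂ) ^ n) * RogersA1 q t n s := by
  induction n with
  | zero =>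
    simp only [RogersA1_zero, zero_add, RogersA1_one, ← hst]
    field_simp
    ring
  | succ n ih =>
    have h := RogersA1_recurrence hq ht (n + 1) hs
    have h0 := ht n
    have h1 := ht (n + 1)
    simp only [rogersGamma, Nat.add_sub_cancel] at h
    have e : (1 - (q : ℂ) ^ (n + 1)) * (1 - t ^ 2 * (q : ℂ) ^ n) /
          ((1 - t * (q : ℂ) ^ n) * (1 - t * (q : ℂ) ^ (n + 1))) * RogersA1 q t n s =
        (1 - (q : ℂ) ^ (n + 1)) * s * RogersA1 q t (n + 1) s / (1 - t * (q : ℂ) ^ (n + 1)) := by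
      rw [div_mul_eq_mul_div, mul_assoc, ← ih]
      field_simp
    rw [e] at h
    have hP : RogersA1 q t (n + 1 + 1) s = (s + s⁻¹) * RogersA1 q t (n + 1) s -
        (1 - (q : ℂ) ^ (n + 1)) * s * RogersA1 q t (n + 1) s / (1 - t * (q : ℂ) ^ (n + 1)) := by
      linear_combination -h
    rw [hP]
    generalize RogersA1 q t (n + 1) s = P
    subst hst
    field_simp
    ring

/-- The infinite `q`-Pochhammer product `∏_{j ≥ 0} (1 - a q^j)`. -/
def qPochInf (q a : ℂ) : ℂ := ∏' j : ℕ, (1 - a * q ^ j)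

lemma summable_norm_mul_pow {q : ℂ} (hq : ‖q‖ < 1) (a : ℂ) :
    Summable fun j : ℕ => ‖-(a * q ^ j)‖ := by
  simpa using (summable_geometric_of_lt_one (norm_nonneg q) hq).mul_left ‖a‖

lemma multipliable_qPochInf {q : ℂ} (hq : ‖q‖ < 1) (a : ℂ) :
    Multipliable fun j : ℕ => 1 - a * q ^ j := by
  simpa [sub_eq_add_neg] using multipliable_one_add_of_summable (summable_norm_mul_pow hq a)

lemma qPochInf_eq_mul {q : ℂ} (hq : ‖q‖ < 1) (a : ℂ) :
    qPochInf q a = (1 - a) * qPochInf q (a * q) := by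
  have h := multipliable_qPochInf hq (a * q)
  have e : ∀ j : ℕ, a * q * q ^ j = a * q ^ (j + 1) := fun j => by ring
  simp only [e] at h
  have h' := tprod_eq_zero_mul' (f := fun j : ℕ => 1 - a * q ^ j) h
  rw [pow_zero, mul_one] at h'
  simp only [qPochInf, e, h']

lemma one_sub_ne_zero_of_norm_lt {z : ℂ} (hz : ‖z‖ < 1) : 1 - z ≠ 0 := by
  intro h
  rw [← sub_eq_zero.mp h] at hz
  simp at hz

lemma qPochInf_ne_zero {q : ℂ} (hq : ‖q‖ < 1) {a : ℂ} (ha : ‖a‖ < 1) : qPochInf q a ≠ 0 := by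
  have h := tprod_one_add_ne_zero_of_summable (f := fun j : ℕ => -(a * q ^ j)) (fun j => by
    rw [← sub_eq_add_neg]
    refine one_sub_ne_zero_of_norm_lt ?_
    rw [norm_mul, norm_pow]
    exact mul_lt_one_of_nonneg_of_lt_one_left (norm_nonneg a) ha
      (pow_le_one₀ (norm_nonneg q) hq.le)) (summable_norm_mul_pow hq a)
  simpa [qPochInf, sub_eq_add_neg] using h

lemma differentiable_qPochInf {q : ℂ} (hq : ‖q‖ < 1) : Differentiable ℂ (qPochInf q) := by
  intro a
  have hu : Summable fun j : ℕ => (‖a‖ + 1) * ‖q‖ ^ j :=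
    (summable_geometric_of_lt_one (norm_nonneg q) hq).mul_left _
  have h := Summable.hasProdLocallyUniformlyOn_nat_one_add (K := Metric.ball (0 : ℂ) (‖a‖ + 1))
    (f := fun (j : ℕ) (a : ℂ) => -(a * q ^ j)) Metric.isOpen_ball hu
    (.of_forall fun j x hx => by
      rw [norm_neg, norm_mul, norm_pow]
      gcongr
      exact (mem_ball_zero_iff.mp hx).le) (fun j => by fun_prop)
  have hd := h.differentiableOn (.of_forall fun _ => by
    simpa [Finset.prod_fn] using DifferentiableOn.finsetProd (fun _ _ => by fun_prop))
    Metric.isOpen_ball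
  have := hd.differentiableAt (Metric.isOpen_ball.mem_nhds (mem_ball_zero_iff.mpr (lt_add_one ‖a‖)))
  have e : qPochInf q = fun a => ∏' j : ℕ, (1 + -(a * q ^ j)) := by
    funext a
    simp only [qPochInf, sub_eq_add_neg]
  rwa [e]

lemma continuous_qPochInf {q : ℂ} (hq : ‖q‖ < 1) : Continuous (qPochInf q) :=
  (differentiable_qPochInf hq).continuous

lemma muA1_eq {q : ℝ} (hq : ‖(q : ℂ)‖ < 1) {t X : ℂ} (h₁ : ‖t * X ^ 2‖ < 1)
    (h₂ : ‖t * X⁻¹ ^ 2 * q‖ < 1) :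
    muA1 q t X = qPochInf q (X ^ 2) * qPochInf q (X⁻¹ ^ 2 * q) /
      (qPochInf q (t * X ^ 2) * qPochInf q (t * X⁻¹ ^ 2 * q)) := by
  have e : ∀ (a : ℂ) (j : ℕ), a * (q : ℂ) ^ (j + 1) = a * q * q ^ j := fun a j => by ring
  have m := fun a => multipliable_qPochInf hq a
  simp only [muA1, e]
  rw [Multipliable.tprod_div₀ ((m _).mul (m _)) ((m _).mul (m _)), (m _).tprod_mul (m _),
    (m _).tprod_mul (m _)]
  · rfl
  · rw [(m _).tprod_mul (m _)]
    exact mul_ne_zero (qPochInf_ne_zero hq h₁) (qPochInf_ne_zero hq h₂)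

/-- The part of the weight `muA1` that is invariant under `X ↦ X⁻¹`. -/
def symmWeight (q : ℝ) (t X : ℂ) : ℂ :=
  qPochInf q (X ^ 2 * q) * qPochInf q (X⁻¹ ^ 2 * q) /
    (qPochInf q (t * X ^ 2 * q) * qPochInf q (t * X⁻¹ ^ 2 * q))

lemma symmWeight_inv (q : ℝ) (t X : ℂ) : symmWeight q t X⁻¹ = symmWeight q t X := by
  simp only [symmWeight, inv_inv]
  ring

lemma muA1_mul_eq_symmWeight {q : ℝ} (hq : ‖(q : ℂ)‖ < 1) {t X : ℂ} (h₁ : ‖t * X ^ 2‖ < 1)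
    (h₂ : ‖t * X⁻¹ ^ 2 * q‖ < 1) :
    muA1 q t X * (1 - t * X ^ 2) = symmWeight q t X * (1 - X ^ 2) := by
  have h₃ := one_sub_ne_zero_of_norm_lt h₁
  rw [muA1_eq hq h₁ h₂, symmWeight, qPochInf_eq_mul hq (X ^ 2), qPochInf_eq_mul hq (t * X ^ 2),
    mul_assoc (1 - t * X ^ 2)]
  have h₄ : ‖t * X ^ 2 * q‖ < 1 := by
    rw [norm_mul]
    exact mul_lt_one_of_nonneg_of_lt_one_left (norm_nonneg _) h₁ hq.le
  have h₅ := qPochInf_ne_zero hq h₄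
  have h₆ := qPochInf_ne_zero hq h₂
  rw [div_mul_eq_mul_div, div_mul_eq_mul_div,
    div_eq_div_iff (mul_ne_zero h₃ (mul_ne_zero h₅ h₆)) (mul_ne_zero h₅ h₆)]
  ring

lemma differentiableAt_muA1 {q : ℝ} (hq : ‖(q : ℂ)‖ < 1) {t X : ℂ} (hX : X ≠ 0)
    (h₁ : ‖t * X ^ 2‖ < 1) (h₂ : ‖t * X⁻¹ ^ 2 * q‖ < 1) :
    DifferentiableAt ℂ (muA1 q t) X := by
  have hP : Differentiable ℂ (qPochInf q) := differentiable_qPochInf hq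
  have c₁ : ContinuousAt (fun X : ℂ => ‖t * X ^ 2‖) X := by fun_prop
  have c₂ : ContinuousAt (fun X : ℂ => ‖t * X⁻¹ ^ 2 * q‖) X := by fun_prop (disch := assumption)
  have hev : muA1 q t =ᶠ[nhds X] fun X => qPochInf q (X ^ 2) * qPochInf q (X⁻¹ ^ 2 * q) /
      (qPochInf q (t * X ^ 2) * qPochInf q (t * X⁻¹ ^ 2 * q)) := by
    filter_upwards [c₁.eventually_lt_const h₁, c₂.eventually_lt_const h₂] with Y h h'
    exact muA1_eq hq h h'
  refine DifferentiableAt.congr_of_eventuallyEq ?_ hev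
  have d (f : ℂ → ℂ) (hf : DifferentiableAt ℂ f X) :
      DifferentiableAt ℂ (fun X => qPochInf q (f X)) X := (hP (f X)).comp X hf
  refine DifferentiableAt.fun_div ?_ ?_
    (mul_ne_zero (qPochInf_ne_zero hq h₁) (qPochInf_ne_zero hq h₂))
  · exact (d _ (by fun_prop)).mul (d _ (by fun_prop (disch := assumption)))
  · exact (d _ (by fun_prop)).mul (d _ (by fun_prop (disch := assumption)))

lemma muA1_div_eq {q : ℝ} {t r X : ℂ} (hr : r ^ 2 = q) (hr0 : r ≠ 0)
    (hq : ‖(q : ℂ)‖ < 1) (h₁ : ‖t * X ^ 2‖ < 1) (h₂ : ‖t * X⁻¹ ^ 2 * q‖ < 1) :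
    muA1 q t (r * X⁻¹) = muA1 q t X := by
  have e₁ : (r * X⁻¹) ^ 2 = X⁻¹ ^ 2 * q := by rw [mul_pow, hr, mul_comm]
  have e₂ : (r * X⁻¹)⁻¹ ^ 2 * q = X ^ 2 := by
    rw [mul_inv, inv_inv, mul_pow, ← hr]
    field_simp
  rw [muA1_eq hq h₁ h₂, muA1_eq hq, e₁, e₂, mul_assoc t _ (q : ℂ), e₂, ← mul_assoc]
  · ring
  · rwa [e₁, ← mul_assoc]
  · rwa [mul_assoc t, e₂]

lemma thetaA1_eq_tsum {p q : ℝ} (hp : 0 < p) (hpq : p ^ 4 = q) (x : ℂ) :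
    thetaA1 q x = ∑' j : ℤ, (p : ℂ) ^ (j ^ 2) * x ^ j := by
  refine tsum_congr fun j => ?_
  have : q ^ ((j : ℝ) ^ 2 / 4) = p ^ (j ^ 2) := by
    rw [← hpq, ← Real.rpow_natCast, ← Real.rpow_mul hp.le, ← Real.rpow_intCast]
    congr 1
    push_cast
    ring
  rw [this, Complex.ofReal_zpow]

lemma thetaA1_inv (q : ℝ) (x : ℂ) : thetaA1 q x⁻¹ = thetaA1 q x := by
  rw [thetaA1, thetaA1, ← (Equiv.neg ℤ).tsum_eq]
  simp

lemma thetaA1_div {p q : ℝ} (hp : 0 < p) (hpq : p ^ 4 = q) {x : ℂ} (hx : x ≠ 0) :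
    (p : ℂ) * thetaA1 q (x / (p : ℂ) ^ 2) = x * thetaA1 q x := by
  have hp' : (p : ℂ) ≠ 0 := by exact_mod_cast hp.ne'
  rw [thetaA1_eq_tsum hp hpq, thetaA1_eq_tsum hp hpq, ← tsum_mul_left, ← tsum_mul_left,
    ← (Equiv.addRight (1 : ℤ)).tsum_eq]
  refine tsum_congr fun j => ?_
  have e : ((p : ℂ) ^ 2) ^ (j + 1) = (p : ℂ) ^ (2 * (j + 1)) := by
    rw [← zpow_natCast, ← zpow_mul]; rfl
  have e' : (p : ℂ) * (p : ℂ) ^ ((j + 1) ^ 2) = (p : ℂ) ^ (j ^ 2) * (p : ℂ) ^ (2 * (j + 1)) := by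
    rw [← zpow_one_add₀ hp', ← zpow_add₀ hp']
    congr 1
    ring
  simp only [Equiv.coe_addRight]
  rw [div_zpow, e, ← mul_assoc, e', zpow_add_one₀ hx]
  field_simp

lemma thetaA1_cexp {q : ℝ} (hq : 0 < q) (z : ℂ) :
    thetaA1 q (Complex.exp z) = jacobiTheta₂ (z / (2 * Real.pi * Complex.I))
      (Complex.I * (-Real.log q / (4 * Real.pi) : ℝ)) := by
  refine tsum_congr fun j => ?_
  have hpi : (Real.pi : ℂ) ≠ 0 := by exact_mod_cast Real.pi_ne_zero
  rw [jacobiTheta₂_term, Real.rpow_def_of_pos hq, Complex.ofReal_exp, ← Complex.exp_int_mul,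
    ← Complex.exp_add]
  congr 1
  push_cast
  field_simp
  linear_combination ((j : ℂ) ^ 2 * (Real.log q : ℂ)) * Complex.I_sq

lemma differentiableAt_thetaA1 {q : ℝ} (hq0 : 0 < q) (hq1 : q < 1) {x : ℂ} (hx : x ≠ 0) :
    DifferentiableAt ℂ (thetaA1 q) x := by
  have him : 0 < (Complex.I * (-Real.log q / (4 * Real.pi) : ℝ)).im := by
    have := Real.log_neg hq0 hq1
    rw [Complex.I_mul_im, Complex.ofReal_re]
    have := Real.pi_pos
    apply div_pos <;> linarith
  have hev : thetaA1 q =ᶠ[nhds x] fun y => jacobiTheta₂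
      ((Complex.log (y / x) + Complex.log x) / (2 * Real.pi * Complex.I))
      (Complex.I * (-Real.log q / (4 * Real.pi) : ℝ)) := by
    filter_upwards [isOpen_ne.mem_nhds hx] with y hy
    rw [← thetaA1_cexp hq0, Complex.exp_add, Complex.exp_log (div_ne_zero hy hx),
      Complex.exp_log hx, div_mul_cancel₀ _ hx]
  refine DifferentiableAt.congr_of_eventuallyEq ?_ hev
  refine DifferentiableAt.comp (g := fun z => jacobiTheta₂ z
    (Complex.I * (-Real.log q / (4 * Real.pi) : ℝ))) x (differentiableAt_jacobiTheta₂_fst _ him) ?_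
  have : x / x ∈ Complex.slitPlane := by rw [div_self hx]; simp
  fun_prop (disch := assumption)

/-- The integral of `g` over the unit circle with respect to the angle. -/
def circInt (g : ℂ → ℂ) : ℂ :=
  ∫ φ : ℝ in (0 : ℝ)..(2 * Real.pi), g (Complex.exp (Complex.I * (φ : ℂ)))

lemma norm_cexp_I_mul (φ : ℝ) : ‖Complex.exp (Complex.I * (φ : ℂ))‖ = 1 := by
  rw [mul_comm, Complex.norm_exp_ofReal_mul_I]

lemma circInt_congr {f g : ℂ → ℂ} (h : ∀ x : ℂ, ‖x‖ = 1 → f x = g x) : circInt f = circInt g :=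
  intervalIntegral.integral_congr fun φ _ => h _ (norm_cexp_I_mul φ)

lemma continuous_comp_cexp {g : ℂ → ℂ} (hg : ∀ x : ℂ, ‖x‖ = 1 → ContinuousAt g x) :
    Continuous fun φ : ℝ => g (Complex.exp (Complex.I * (φ : ℂ))) :=
  continuous_iff_continuousAt.mpr fun φ => ContinuousAt.comp (f := fun φ : ℝ =>
    Complex.exp (Complex.I * (φ : ℂ))) (hg _ (norm_cexp_I_mul φ)) (by fun_prop)

lemma circInt_add {f g : ℂ → ℂ} (hf : ∀ x : ℂ, ‖x‖ = 1 → ContinuousAt f x)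
    (hg : ∀ x : ℂ, ‖x‖ = 1 → ContinuousAt g x) :
    circInt (fun x => f x + g x) = circInt f + circInt g :=
  intervalIntegral.integral_add ((continuous_comp_cexp hf).intervalIntegrable _ _)
    ((continuous_comp_cexp hg).intervalIntegrable _ _)

lemma circInt_const_mul (c : ℂ) (f : ℂ → ℂ) : circInt (fun x => c * f x) = c * circInt f :=
  intervalIntegral.integral_const_mul _ _

lemma circInt_inv (g : ℂ → ℂ) : circInt (fun x => g x⁻¹) = circInt g := by
  have h := intervalIntegral.integral_comp_sub_left
    (fun φ : ℝ => g (Complex.exp (Complex.I * (φ : ℂ)))) (a := 0) (b := 2 * Real.pi)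
    (2 * Real.pi)
  rw [sub_self, sub_zero] at h
  rw [circInt, circInt, ← h]
  refine intervalIntegral.integral_congr fun φ _ => ?_
  have : Complex.I * ((2 * Real.pi - φ : ℝ) : ℂ) =
      -(Complex.I * (φ : ℂ)) + 2 * Real.pi * Complex.I := by push_cast; ring
  simp only [this]
  rw [Complex.exp_add, Complex.exp_two_pi_mul_I, mul_one, Complex.exp_neg]

lemma circInt_eq_zero_of_odd {g : ℂ → ℂ} (hg : ∀ x : ℂ, ‖x‖ = 1 → g x⁻¹ = -g x) :
    circInt g = 0 := by
  have h := circInt_inv g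
  rw [circInt_congr hg] at h
  have h' : circInt (fun x => -g x) = -circInt g := by
    simpa using circInt_const_mul (-1) g
  rw [h'] at h
  linear_combination (-1 / 2 : ℂ) * h

lemma circInt_eq_circleIntegral (R : ℝ) (hR : R ≠ 0) (g : ℂ → ℂ) :
    Complex.I * circInt (fun x => g (R * x)) = ∮ z in C(0, R), (z - 0)⁻¹ • g z := by
  rw [circInt, circleIntegral, ← intervalIntegral.integral_const_mul]
  refine intervalIntegral.integral_congr fun φ _ => ?_
  have h : circleMap 0 R φ = R * Complex.exp (Complex.I * (φ : ℂ)) := by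
    simp [circleMap, mul_comm]
  have h0 := circleMap_ne_center (c := 0) (θ := φ) hR
  simp only [deriv_circleMap, smul_eq_mul, sub_zero]
  rw [← h]
  field_simp

lemma circInt_dilate {r : ℝ} (hr0 : 0 < r) (hr1 : r ≤ 1) {g : ℂ → ℂ}
    (hg : ∀ x : ℂ, r ≤ ‖x‖ → ‖x‖ ≤ 1 → DifferentiableAt ℂ g x) :
    circInt (fun x => g (r * x)) = circInt g := by
  have h := Complex.circleIntegral_sub_center_inv_smul_eq_of_differentiable_on_annulus_off_countable
    (c := 0) hr0 hr1 (f := g) Set.countable_empty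
    (fun x hx => (hg x (by simpa using hx.2) (by simpa using hx.1)).continuousAt.continuousWithinAt)
    (fun x hx => hg x (le_of_lt (by simpa using hx.1.2)) (le_of_lt (by simpa using hx.1.1)))
  rw [← circInt_eq_circleIntegral _ hr0.ne', ← circInt_eq_circleIntegral _ one_ne_zero] at h
  simpa using (mul_left_cancel₀ Complex.I_ne_zero h).symm

/-- The integral of `f` against the theta function and the weight `muA1`. -/
def gaussInt (q : ℝ) (t : ℂ) (f : ℂ → ℂ) : ℂ :=
  circInt fun x => f x * thetaA1 q x * muA1 q t x

lemma norm_ofReal_lt_one {q : ℝ} (hq0 : 0 < q) (hq1 : q < 1) : ‖(q : ℂ)‖ < 1 := by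
  rwa [Complex.norm_of_nonneg hq0.le]

lemma norm_mul_sq_lt_one {t x : ℂ} (ht : ‖t‖ < 1) (hx : ‖x‖ ≤ 1) : ‖t * x ^ 2‖ < 1 := by
  rw [norm_mul, norm_pow]
  exact mul_lt_one_of_nonneg_of_lt_one_left (norm_nonneg t) ht (pow_le_one₀ (norm_nonneg x) hx)

lemma norm_mul_inv_sq_mul_lt_one {q : ℝ} (hq : 0 < q) {t x : ℂ} (ht : ‖t‖ < 1)
    (hx : q ≤ ‖x‖ ^ 2) : ‖t * x⁻¹ ^ 2 * q‖ < 1 := by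
  rw [mul_assoc, norm_mul, norm_mul, norm_pow, norm_inv, Complex.norm_of_nonneg hq.le]
  refine mul_lt_one_of_nonneg_of_lt_one_left (norm_nonneg t) ht ?_
  rw [inv_pow, inv_mul_eq_div]
  exact (div_le_one (hq.trans_le hx)).mpr hx

lemma ne_zero_of_norm_eq_one {x : ℂ} (hx : ‖x‖ = 1) : x ≠ 0 := by
  rintro rfl
  simp at hx

lemma norm_mul_inv_sq_mul_lt_one' {q : ℝ} (hq0 : 0 < q) (hq1 : q < 1) {t x : ℂ} (ht : ‖t‖ < 1)
    (hx : ‖x‖ = 1) : ‖t * x⁻¹ ^ 2 * q‖ < 1 :=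
  norm_mul_inv_sq_mul_lt_one hq0 ht (by rw [hx, one_pow]; exact hq1.le)

lemma differentiableAt_gaussInt_integrand {q : ℝ} (hq0 : 0 < q) (hq1 : q < 1) {t x : ℂ}
    (ht : ‖t‖ < 1) (hx₁ : q ≤ ‖x‖ ^ 2) (hx₂ : ‖x‖ ≤ 1) {f : ℂ → ℂ}
    (hf : DifferentiableAt ℂ f x) :
    DifferentiableAt ℂ (fun x => f x * thetaA1 q x * muA1 q t x) x := by
  have hx : x ≠ 0 := by
    rintro rfl
    simp at hx₁
    linarith
  exact (hf.mul (differentiableAt_thetaA1 hq0 hq1 hx)).mul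
    (differentiableAt_muA1 (norm_ofReal_lt_one hq0 hq1) hx (norm_mul_sq_lt_one ht hx₂)
      (norm_mul_inv_sq_mul_lt_one hq0 ht hx₁))

lemma gaussInt_congr {q : ℝ} {t : ℂ} {f g : ℂ → ℂ} (h : ∀ x : ℂ, ‖x‖ = 1 → f x = g x) :
    gaussInt q t f = gaussInt q t g :=
  circInt_congr fun x hx => by rw [h x hx]

lemma gaussInt_const_mul (q : ℝ) (t c : ℂ) (f : ℂ → ℂ) :
    gaussInt q t (fun x => c * f x) = c * gaussInt q t f := by
  simp only [gaussInt, mul_assoc c]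
  exact circInt_const_mul c _

lemma gaussInt_add {q : ℝ} (hq0 : 0 < q) (hq1 : q < 1) {t : ℂ} (ht : ‖t‖ < 1) {f g : ℂ → ℂ}
    (hf : ∀ x ≠ 0, DifferentiableAt ℂ f x) (hg : ∀ x ≠ 0, DifferentiableAt ℂ g x) :
    gaussInt q t (fun x => f x + g x) = gaussInt q t f + gaussInt q t g := by
  have h {f : ℂ → ℂ} (hf : ∀ x ≠ 0, DifferentiableAt ℂ f x) (x : ℂ) (hx : ‖x‖ = 1) :
      ContinuousAt (fun x => f x * thetaA1 q x * muA1 q t x) x :=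
    (differentiableAt_gaussInt_integrand hq0 hq1 ht (by rw [hx, one_pow]; exact hq1.le) hx.le
      (hf x (ne_zero_of_norm_eq_one hx))).continuousAt
  rw [gaussInt, gaussInt, gaussInt, ← circInt_add (h hf) (h hg)]
  exact circInt_congr fun x _ => by ring

lemma gaussInt_linear {q : ℝ} (hq0 : 0 < q) (hq1 : q < 1) {t : ℂ} (ht : ‖t‖ < 1) {f g : ℂ → ℂ}
    (a b : ℂ) (hf : ∀ x ≠ 0, DifferentiableAt ℂ f x) (hg : ∀ x ≠ 0, DifferentiableAt ℂ g x) :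
    gaussInt q t (fun x => a * f x + b * g x) = a * gaussInt q t f + b * gaussInt q t g := by
  rw [gaussInt_add hq0 hq1 ht (fun x hx => (hf x hx).const_mul a)
    (fun x hx => (hg x hx).const_mul b), gaussInt_const_mul, gaussInt_const_mul]

lemma gaussInt_eq_zero {q : ℝ} (hq0 : 0 < q) (hq1 : q < 1) {t : ℂ} (ht : ‖t‖ < 1) {f g : ℂ → ℂ}
    (hg : ∀ x : ℂ, ‖x‖ = 1 → g x⁻¹ = -g x)
    (hfg : ∀ x : ℂ, ‖x‖ = 1 → (1 - x ^ 2) * f x = (1 - t * x ^ 2) * g x) :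
    gaussInt q t f = 0 := by
  have h : gaussInt q t f = circInt fun x => g x * thetaA1 q x * symmWeight q t x := by
    refine circInt_congr fun x hx => ?_
    have h₁ := norm_mul_sq_lt_one ht hx.le
    have hmu := muA1_mul_eq_symmWeight (norm_ofReal_lt_one hq0 hq1) h₁
      (norm_mul_inv_sq_mul_lt_one' hq0 hq1 ht hx)
    have hfg := hfg x hx
    have h₁ := one_sub_ne_zero_of_norm_lt h₁
    by_cases hx2 : 1 - x ^ 2 = 0
    · have hinv : x⁻¹ = x := inv_eq_of_mul_eq_one_left (by linear_combination -hx2)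
      have hgx := hg x hx
      rw [hinv] at hgx
      have hgx : g x = 0 := by linear_combination hgx / 2
      have hmu0 : muA1 q t x = 0 := by
        rw [hx2, mul_zero] at hmu
        exact (mul_eq_zero.mp hmu).resolve_right h₁
      rw [hgx, hmu0]
      ring
    · refine mul_left_cancel₀ hx2 ?_
      linear_combination thetaA1 q x * muA1 q t x * hfg + thetaA1 q x * g x * hmu
  rw [h]
  refine circInt_eq_zero_of_odd fun x hx => ?_
  rw [hg x hx, thetaA1_inv, symmWeight_inv]
  ring

lemma gaussInt_mul_eq_zero {q : ℝ} (hq0 : 0 < q) (hq1 : q < 1) {t : ℂ} (ht : ‖t‖ < 1)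
    {k : ℂ → ℂ} (hk : ∀ x : ℂ, ‖x‖ = 1 → k x⁻¹ = k x) :
    gaussInt q t (fun x => (x⁻¹ - t * x) * k x) = 0 := by
  refine gaussInt_eq_zero hq0 hq1 ht (g := fun x => (x⁻¹ - x) * k x) (fun x hx => ?_)
    (fun x hx => ?_)
  · rw [hk x hx, inv_inv]
    ring
  · have := ne_zero_of_norm_eq_one hx
    field_simp

lemma gaussInt_id_mul {p q : ℝ} (hp0 : 0 < p) (hp1 : p < 1) (hpq : p ^ 4 = q) {t : ℂ}
    (ht : ‖t‖ < 1) {f : ℂ → ℂ} (hf : ∀ x ≠ 0, DifferentiableAt ℂ f x) :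
    gaussInt q t (fun x => x * f x) = p * gaussInt q t (fun x => f ((p : ℂ) ^ 2 / x)) := by
  have hq0 : 0 < q := hpq ▸ pow_pos hp0 4
  have hq1 : q < 1 := hpq ▸ pow_lt_one₀ hp0.le hp1 (by norm_num)
  have hp : (p : ℂ) ≠ 0 := by exact_mod_cast hp0.ne'
  have hr : ((p ^ 2 : ℝ) : ℂ) ^ 2 = q := by
    rw [← hpq]
    push_cast
    ring
  have hd := circInt_dilate (r := p ^ 2) (by positivity) (pow_le_one₀ hp0.le hp1.le)
    (g := fun x => x * f x * thetaA1 q x * muA1 q t x) (fun x h₁ h₂ => by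
      refine differentiableAt_gaussInt_integrand hq0 hq1 ht ?_ h₂ (f := fun x => x * f x) ?_
      · calc q = (p ^ 2) ^ 2 := by rw [← hpq]; ring
          _ ≤ ‖x‖ ^ 2 := by gcongr
      · have hx : x ≠ 0 := by
          rintro rfl
          rw [norm_zero] at h₁
          exact absurd h₁ (not_le.mpr (by positivity))
        exact differentiableAt_id.mul (hf x hx))
  rw [gaussInt, ← hd, ← circInt_inv, ← gaussInt_const_mul]
  refine circInt_congr fun x hx => ?_
  have hx0 := ne_zero_of_norm_eq_one hx
  have hθ := thetaA1_div hp0 hpq hx0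
  rw [← thetaA1_inv, inv_div, div_eq_mul_inv] at hθ
  have hμ := muA1_div_eq hr (by simpa using hp) (norm_ofReal_lt_one hq0 hq1)
    (norm_mul_sq_lt_one ht hx.le) (norm_mul_inv_sq_mul_lt_one' hq0 hq1 ht hx)
  push_cast at hμ ⊢
  rw [hμ, div_eq_mul_inv]
  refine mul_left_cancel₀ hx0 ?_
  have hxx : x * x⁻¹ = 1 := mul_inv_cancel₀ hx0
  linear_combination (p * f (p ^ 2 * x⁻¹) * muA1 q t x) * hθ +
    (p ^ 2 * f (p ^ 2 * x⁻¹) * thetaA1 q (p ^ 2 * x⁻¹) * muA1 q t x) * hxx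

lemma summable_pow_sq {p : ℝ} (hp0 : 0 < p) (hp1 : p < 1) :
    Summable fun j : ℤ => p ^ (j ^ 2) := by
  have h : Summable fun n : ℕ => p ^ ((n : ℤ) ^ 2) := by
    refine (summable_geometric_of_lt_one hp0.le hp1).of_nonneg_of_le (fun n => by positivity)
      fun n => ?_
    have : p ^ ((n : ℤ) ^ 2) = p ^ (n ^ 2) := by exact_mod_cast zpow_natCast p (n ^ 2)
    rw [this]
    exact pow_le_pow_of_le_one hp0.le hp1.le (Nat.le_self_pow two_ne_zero n)
  exact Summable.of_nat_of_neg h (by simpa using h)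

lemma circInt_zpow (k : ℤ) : circInt (fun x => x ^ k) = if k = 0 then 2 * (Real.pi : ℂ) else 0 := by
  split_ifs with hk
  · simp [circInt, hk]
  · have h : circInt (fun x => x ^ k) =
        ∫ φ : ℝ in (0 : ℝ)..(2 * Real.pi), Complex.exp ((k * Complex.I) * φ) := by
      refine intervalIntegral.integral_congr fun φ _ => ?_
      simp only [← Complex.exp_int_mul]
      congr 1
      ring
    rw [h, integral_exp_mul_complex (by simpa using hk)]
    have : (k : ℂ) * Complex.I * ((2 * Real.pi : ℝ) : ℂ) = k * (2 * Real.pi * Complex.I) := by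
      push_cast
      ring
    rw [this, Complex.exp_int_mul_two_pi_mul_I]
    simp

lemma circInt_zpow_mul_thetaA1 {p q : ℝ} (hp0 : 0 < p) (hp1 : p < 1) (hpq : p ^ 4 = q) (k : ℤ) :
    circInt (fun x => x ^ k * thetaA1 q x) = 2 * Real.pi * (p : ℂ) ^ (k ^ 2) := by
  have hs := intervalIntegral.hasSum_integral_of_dominated_convergence (μ := MeasureTheory.volume)
    (a := 0) (b := 2 * Real.pi)
    (F := fun (j : ℤ) (φ : ℝ) => (p : ℂ) ^ (j ^ 2) *
      Complex.exp (Complex.I * (φ : ℂ)) ^ (k + j))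
    (f := fun φ : ℝ => Complex.exp (Complex.I * (φ : ℂ)) ^ k *
      thetaA1 q (Complex.exp (Complex.I * (φ : ℂ))))
    (fun j _ => p ^ (j ^ 2)) (fun j => ?_) (fun j => ?_) ?_ ?_ ?_
  · have hk := hs.tsum_eq
    rw [circInt, ← hk, tsum_eq_single (-k)]
    · have := circInt_zpow 0
      simp only [circInt] at this
      rw [intervalIntegral.integral_const_mul, add_neg_cancel, this]
      simp [mul_comm]
    · intro j hj
      have := circInt_zpow (k + j)
      rw [if_neg (fun h => hj (by linarith))] at this
      simp only [circInt] at this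
      rw [intervalIntegral.integral_const_mul, this, mul_zero]
  · refine Continuous.aestronglyMeasurable ?_
    refine continuous_const.mul (Continuous.zpow₀ (by fun_prop) _ fun φ => ?_)
    exact Or.inl (Complex.exp_ne_zero _)
  · refine .of_forall fun φ _ => ?_
    rw [norm_mul, norm_zpow, norm_zpow, norm_cexp_I_mul, one_zpow, mul_one,
      Complex.norm_of_nonneg hp0.le]
  · exact .of_forall fun φ _ => summable_pow_sq hp0 hp1
  · simp
  · refine .of_forall fun φ _ => ?_
    have hx : Complex.exp (Complex.I * (φ : ℂ)) ≠ 0 := Complex.exp_ne_zero _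
    have hsum : Summable fun j : ℤ =>
        (p : ℂ) ^ (j ^ 2) * Complex.exp (Complex.I * (φ : ℂ)) ^ j := by
      refine Summable.of_norm_bounded (summable_pow_sq hp0 hp1) fun j => ?_
      rw [norm_mul, norm_zpow, norm_zpow, norm_cexp_I_mul, one_zpow, mul_one,
        Complex.norm_of_nonneg hp0.le]
    rw [thetaA1_eq_tsum hp0 hpq]
    convert! hsum.hasSum.mul_left (Complex.exp (Complex.I * (φ : ℂ)) ^ k) using 1
    funext j
    rw [zpow_add₀ hx]
    ring

lemma gaussInt_id {p q : ℝ} (hp0 : 0 < p) (hp1 : p < 1) (hpq : p ^ 4 = q) {t : ℂ}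
    (ht : ‖t‖ < 1) : gaussInt q t (fun x => x) = p * gaussInt q t (fun _ => 1) := by
  simpa using gaussInt_id_mul hp0 hp1 hpq ht (f := fun _ => 1) (fun x _ => by fun_prop)

lemma gaussInt_sq {p q : ℝ} (hp0 : 0 < p) (hp1 : p < 1) (hpq : p ^ 4 = q) {t : ℂ}
    (ht : ‖t‖ < 1) : gaussInt q t (fun x => x ^ 2) = q * t * gaussInt q t (fun _ => 1) := by
  have hq0 : 0 < q := hpq ▸ pow_pos hp0 4
  have hq1 : q < 1 := hpq ▸ pow_lt_one₀ hp0.le hp1 (by norm_num)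
  have h := gaussInt_id_mul hp0 hp1 hpq ht (f := fun x => x) (fun x _ => by fun_prop)
  simp only [div_eq_mul_inv, ← sq] at h
  rw [gaussInt_const_mul] at h
  have h' := gaussInt_mul_eq_zero hq0 hq1 ht (k := fun _ => 1) (fun _ _ => rfl)
  have h'' := gaussInt_linear hq0 hq1 ht (f := fun x => x⁻¹) (g := fun x => x) 1 (-t)
    (fun x hx => by fun_prop (disch := assumption)) (fun x _ => by fun_prop)
  have e : (fun x : ℂ => (x⁻¹ - t * x) * 1) = fun x => 1 * x⁻¹ + -t * x := by
    funext x
    ring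
  rw [e, h'', gaussInt_id hp0 hp1 hpq ht] at h'
  have h₀ : gaussInt q t Inv.inv = gaussInt q t fun x => x⁻¹ := rfl
  have hqc : (q : ℂ) = p ^ 4 := by exact_mod_cast hpq.symm
  rw [h, h₀, hqc]
  linear_combination (p : ℂ) ^ 3 * h'

lemma gaussInt_inv_sq {p q : ℝ} (hp0 : 0 < p) (hp1 : p < 1) (hpq : p ^ 4 = q) {t : ℂ}
    (ht : ‖t‖ < 1) :
    gaussInt q t (fun x => x⁻¹ ^ 2) = (t - 1 + q * t ^ 2) * gaussInt q t (fun _ => 1) := by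
  have hq0 : 0 < q := hpq ▸ pow_pos hp0 4
  have hq1 : q < 1 := hpq ▸ pow_lt_one₀ hp0.le hp1 (by norm_num)
  have h := gaussInt_mul_eq_zero hq0 hq1 ht (k := fun x => x + x⁻¹)
    (fun x _ => by rw [inv_inv, add_comm])
  have e : gaussInt q t (fun x : ℂ => (x⁻¹ - t * x) * (x + x⁻¹)) =
      gaussInt q t fun x => 1 * (1 * x⁻¹ ^ 2 + (1 - t) * 1) + -t * x ^ 2 := by
    refine gaussInt_congr fun x hx => ?_
    have := ne_zero_of_norm_eq_one hx
    field_simp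
    ring
  rw [e, gaussInt_linear hq0 hq1 ht 1 (-t) (fun x hx => by fun_prop (disch := assumption))
    (fun x _ => by fun_prop), gaussInt_linear hq0 hq1 ht 1 (1 - t)
    (fun x hx => by fun_prop (disch := assumption)) (fun x _ => by fun_prop),
    gaussInt_sq hp0 hp1 hpq ht] at h
  linear_combination h

lemma muA1_mul_shift {q : ℝ} (hq0 : 0 < q) (hq1 : q < 1) {t x : ℂ} (ht : ‖t‖ < 1)
    (hx : ‖x‖ = 1) :
    muA1 q (q * t) x = muA1 q t x * ((1 - t * x ^ 2) * (1 - t * x⁻¹ ^ 2 * q)) := by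
  have hq := norm_ofReal_lt_one hq0 hq1
  have ht' : ‖(q : ℂ) * t‖ < 1 := by
    rw [norm_mul]
    exact mul_lt_one_of_nonneg_of_lt_one_left (norm_nonneg _) hq ht.le
  have a₁ := norm_mul_sq_lt_one ht hx.le
  have a₂ := norm_mul_inv_sq_mul_lt_one' hq0 hq1 ht hx
  have b₁ := norm_mul_sq_lt_one ht' hx.le
  have b₂ := norm_mul_inv_sq_mul_lt_one' hq0 hq1 ht' hx
  rw [muA1_eq hq a₁ a₂, muA1_eq hq b₁ b₂, qPochInf_eq_mul hq (t * x ^ 2),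
    qPochInf_eq_mul hq (t * x⁻¹ ^ 2 * q)]
  have e₁ : (q : ℂ) * t * x ^ 2 = t * x ^ 2 * q := by ring
  have e₂ : (q : ℂ) * t * x⁻¹ ^ 2 * q = t * x⁻¹ ^ 2 * q * q := by ring
  rw [e₁] at b₁ ⊢
  rw [e₂] at b₂ ⊢
  have c₁ := one_sub_ne_zero_of_norm_lt a₁
  have c₂ := one_sub_ne_zero_of_norm_lt a₂
  have d₁ := qPochInf_ne_zero hq b₁
  have d₂ := qPochInf_ne_zero hq b₂
  rw [div_mul_eq_mul_div, div_eq_div_iff (mul_ne_zero d₁ d₂)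
    (mul_ne_zero (mul_ne_zero c₁ d₁) (mul_ne_zero c₂ d₂))]
  ring

lemma gaussInt_one_shift {p q : ℝ} (hp0 : 0 < p) (hp1 : p < 1) (hpq : p ^ 4 = q) {t : ℂ}
    (ht : ‖t‖ < 1) : gaussInt q (q * t) (fun _ => 1) =
      (1 + t * q) * (1 - t ^ 2 * q) * gaussInt q t (fun _ => 1) := by
  have hq0 : 0 < q := hpq ▸ pow_pos hp0 4
  have hq1 : q < 1 := hpq ▸ pow_lt_one₀ hp0.le hp1 (by norm_num)
  have e : gaussInt q (q * t) (fun _ => 1) =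
      gaussInt q t fun x => 1 * ((1 + t ^ 2 * q) * 1 + -t * x ^ 2) + -(t * q) * x⁻¹ ^ 2 := by
    refine circInt_congr fun x hx => ?_
    rw [muA1_mul_shift hq0 hq1 ht hx]
    have hx0 := mul_inv_cancel₀ (ne_zero_of_norm_eq_one hx)
    linear_combination (thetaA1 q x * muA1 q t x * t ^ 2 * q * (x * x⁻¹ + 1)) * hx0
  rw [e, gaussInt_linear hq0 hq1 ht 1 _ (fun x hx => by fun_prop)
    (fun x hx => by fun_prop (disch := assumption)), gaussInt_linear hq0 hq1 ht _ (-t)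
    (fun x hx => by fun_prop) (fun x _ => by fun_prop),
    gaussInt_sq hp0 hp1 hpq ht, gaussInt_inv_sq hp0 hp1 hpq ht]
  ring

/-- The normalized total mass, which turns out not to depend on `t`. -/
def normalizedMass (q : ℝ) (t : ℂ) : ℂ :=
  gaussInt q t (fun _ => 1) * qPochInf q (t ^ 2 * q) / qPochInf q (t * q)

lemma norm_mul_ofReal_lt_one {q : ℝ} (hq0 : 0 < q) (hq1 : q < 1) {t : ℂ} (ht : ‖t‖ < 1) :
    ‖t * q‖ < 1 := by
  rw [norm_mul]
  exact mul_lt_one_of_nonneg_of_lt_one_left (norm_nonneg _) ht (norm_ofReal_lt_one hq0 hq1).le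

lemma normalizedMass_shift {p q : ℝ} (hp0 : 0 < p) (hp1 : p < 1) (hpq : p ^ 4 = q) {t : ℂ}
    (ht : ‖t‖ < 1) : normalizedMass q (q * t) = normalizedMass q t := by
  have hq0 : 0 < q := hpq ▸ pow_pos hp0 4
  have hq1 : q < 1 := hpq ▸ pow_lt_one₀ hp0.le hp1 (by norm_num)
  have hq := norm_ofReal_lt_one hq0 hq1
  have h₁ := norm_mul_ofReal_lt_one hq0 hq1 ht
  have h₂ := norm_mul_ofReal_lt_one hq0 hq1 h₁
  have e₁ : (q : ℂ) * t * q = t * q * q := by ring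
  have e₂ : ((q : ℂ) * t) ^ 2 * q = t ^ 2 * q * q * q := by ring
  rw [normalizedMass, normalizedMass, gaussInt_one_shift hp0 hp1 hpq ht, e₁, e₂,
    qPochInf_eq_mul hq (t * q), qPochInf_eq_mul hq (t ^ 2 * q),
    qPochInf_eq_mul hq (t ^ 2 * q * q)]
  rw [div_eq_div_iff (qPochInf_ne_zero hq h₂)
    (mul_ne_zero (one_sub_ne_zero_of_norm_lt h₁) (qPochInf_ne_zero hq h₂))]
  ring

lemma normalizedMass_self {p q : ℝ} (hp0 : 0 < p) (hp1 : p < 1) (hpq : p ^ 4 = q) :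
    normalizedMass q q = 2 * Real.pi := by
  have hq0 : 0 < q := hpq ▸ pow_pos hp0 4
  have hq1 : q < 1 := hpq ▸ pow_lt_one₀ hp0.le hp1 (by norm_num)
  have hq := norm_ofReal_lt_one hq0 hq1
  have h₁ := norm_mul_ofReal_lt_one hq0 hq1 hq
  have h₂ := norm_mul_ofReal_lt_one hq0 hq1 h₁
  have hθ (k : ℤ) (x : ℂ) (hx : ‖x‖ = 1) : ContinuousAt (fun x => x ^ k * thetaA1 q x) x := by
    have hx0 := ne_zero_of_norm_eq_one hx
    exact (continuousAt_zpow₀ x k (Or.inl hx0)).mul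
      (differentiableAt_thetaA1 hq0 hq1 hx0).continuousAt
  have hc (c : ℂ) (k : ℤ) (x : ℂ) (hx : ‖x‖ = 1) :
      ContinuousAt (fun x => c * (x ^ k * thetaA1 q x)) x := continuousAt_const.mul (hθ k x hx)
  have e : gaussInt q q (fun _ => 1) = circInt fun x =>
      ((1 + (q : ℂ)) * (x ^ (0 : ℤ) * thetaA1 q x) + (-1) * (x ^ (2 : ℤ) * thetaA1 q x)) +
        (-q : ℂ) * (x ^ (-2 : ℤ) * thetaA1 q x) := by
    refine circInt_congr fun x hx => ?_
    have hx0 := ne_zero_of_norm_eq_one hx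
    have a₁ := norm_mul_sq_lt_one hq hx.le
    have a₂ := norm_mul_inv_sq_mul_lt_one' hq0 hq1 hq hx
    rw [muA1_eq hq a₁ a₂, qPochInf_eq_mul hq (x ^ 2), qPochInf_eq_mul hq (x⁻¹ ^ 2 * q)]
    have d₁ := qPochInf_ne_zero hq a₁
    have d₂ := qPochInf_ne_zero hq a₂
    have e₁ : (q : ℂ) * x ^ 2 = x ^ 2 * q := by ring
    have e₂ : (q : ℂ) * x⁻¹ ^ 2 * q = x⁻¹ ^ 2 * q * q := by ring
    rw [e₁] at d₁ ⊢
    rw [e₂] at d₂ ⊢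
    rw [mul_mul_mul_comm, mul_div_cancel_right₀ _ (mul_ne_zero d₁ d₂), zpow_zero, zpow_neg]
    have : x ^ (2 : ℤ) = x ^ 2 := rfl
    rw [this]
    field_simp
    ring
  rw [normalizedMass, e, circInt_add (fun x hx => (hc _ _ x hx).fun_add (hc _ _ x hx)) (hc _ _),
    circInt_add (hc _ _) (hc _ _), circInt_const_mul, circInt_const_mul, circInt_const_mul,
    circInt_zpow_mul_thetaA1 hp0 hp1 hpq, circInt_zpow_mul_thetaA1 hp0 hp1 hpq,
    circInt_zpow_mul_thetaA1 hp0 hp1 hpq, qPochInf_eq_mul hq ((q : ℂ) * q)]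
  have e₃ : (q : ℂ) ^ 2 * q = q * q * q := by ring
  have e₄ : (p : ℂ) ^ ((2 : ℤ) ^ 2) = q := by
    rw [← hpq]
    push_cast
    rfl
  have e₅ : (p : ℂ) ^ ((-2 : ℤ) ^ 2) = q := by rw [← e₄]; rfl
  rw [e₃, e₄, e₅, div_eq_iff (mul_ne_zero (one_sub_ne_zero_of_norm_lt h₁) (qPochInf_ne_zero hq h₂))]
  simp
  ring

lemma continuous_normalizedMass {q : ℝ} (hq0 : 0 < q) (hq1 : q < 1) :
    Continuous fun t : {t : ℂ // ‖t‖ < 1} => normalizedMass q t := by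
  have hq := norm_ofReal_lt_one hq0 hq1
  have hP : Continuous (qPochInf (q : ℂ)) := continuous_qPochInf hq
  have hθ := continuous_comp_cexp fun x hx =>
    (differentiableAt_thetaA1 hq0 hq1 (ne_zero_of_norm_eq_one hx)).continuousAt
  have hc : Continuous fun t : {t : ℂ // ‖t‖ < 1} => gaussInt q t (fun _ => 1) := by
    refine intervalIntegral.continuous_parametric_intervalIntegral_of_continuous' ?_ _ _
    have h₁ := fun y : {t : ℂ // ‖t‖ < 1} × ℝ =>
      norm_mul_sq_lt_one y.1.2 (norm_cexp_I_mul y.2).le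
    have h₂ := fun y : {t : ℂ // ‖t‖ < 1} × ℝ =>
      norm_mul_inv_sq_mul_lt_one' hq0 hq1 y.1.2 (norm_cexp_I_mul y.2)
    have hμ := fun y => muA1_eq hq (h₁ y) (h₂ y)
    have hexp : Continuous fun y : {t : ℂ // ‖t‖ < 1} × ℝ =>
      (Complex.exp (Complex.I * (y.2 : ℂ)))⁻¹ :=
      Continuous.inv₀ (by fun_prop) fun y => Complex.exp_ne_zero _
    simp only [Function.uncurry_def, hμ]
    refine (continuous_const.mul (hθ.comp continuous_snd)).mul (Continuous.div ?_ ?_ fun y =>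
      mul_ne_zero (qPochInf_ne_zero hq (h₁ y)) (qPochInf_ne_zero hq (h₂ y)))
    · fun_prop
    · fun_prop
  exact (hc.mul (by fun_prop)).div (by fun_prop) fun t =>
    qPochInf_ne_zero hq (norm_mul_ofReal_lt_one hq0 hq1 t.2)

lemma normalizedMass_eq {p q : ℝ} (hp0 : 0 < p) (hp1 : p < 1) (hpq : p ^ 4 = q) {t : ℂ}
    (ht : ‖t‖ < 1) : normalizedMass q t = 2 * Real.pi := by
  have hq0 : 0 < q := hpq ▸ pow_pos hp0 4
  have hq1 : q < 1 := hpq ▸ pow_lt_one₀ hp0.le hp1 (by norm_num)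
  have hq := norm_ofReal_lt_one hq0 hq1
  have key {t : ℂ} (ht : ‖t‖ < 1) : normalizedMass q t = normalizedMass q 0 := by
    have hN (N : ℕ) : ‖(q : ℂ) ^ N * t‖ < 1 := by
      rw [norm_mul, norm_pow]
      exact mul_lt_one_of_nonneg_of_lt_one_right (pow_le_one₀ (norm_nonneg _) hq.le)
        (norm_nonneg _) ht
    have hE (N : ℕ) : normalizedMass q ((q : ℂ) ^ N * t) = normalizedMass q t := by
      induction N with
      | zero => simp
      | succ N ih => rw [pow_succ', mul_assoc, normalizedMass_shift hp0 hp1 hpq (hN N), ih]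
    have hlim : Tendsto (fun N : ℕ => (⟨(q : ℂ) ^ N * t, hN N⟩ : {t : ℂ // ‖t‖ < 1})) atTop
        (nhds ⟨0, by simp⟩) := by
      rw [tendsto_subtype_rng]
      simpa using (tendsto_pow_atTop_nhds_zero_of_norm_lt_one hq).mul_const t
    have := ((continuous_normalizedMass hq0 hq1).tendsto _).comp hlim
    simp only [Function.comp_def, hE] at this
    exact tendsto_nhds_unique tendsto_const_nhds this
  rw [key ht, ← key hq, normalizedMass_self hp0 hp1 hpq]

lemma Msym_inv (k : ℕ) (X : ℂ) : Msym k X⁻¹ = Msym k X := by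
  simp only [Msym, inv_inv, add_comm]

lemma RogersA1_inv (q : ℝ) (t : ℂ) (n : ℕ) (X : ℂ) : RogersA1 q t n X⁻¹ = RogersA1 q t n X := by
  simp only [RogersA1, Msym_inv]

lemma differentiableAt_RogersA1 (q : ℝ) (t : ℂ) (n : ℕ) {f : ℂ → ℂ} {x : ℂ}
    (hf : DifferentiableAt ℂ f x) (hx : f x ≠ 0) :
    DifferentiableAt ℂ (fun x => RogersA1 q t n (f x)) x := by
  have hM (k : ℕ) : DifferentiableAt ℂ (fun x => Msym k (f x)) x := by
    unfold Msym
    split_ifs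
    · fun_prop
    · fun_prop (disch := assumption)
  unfold RogersA1
  fun_prop

lemma one_sub_pow_succ_ne_zero {q : ℝ} (hq0 : 0 < q) (hq1 : q < 1) (i : ℕ) :
    1 - (q : ℂ) ^ (i + 1) ≠ 0 :=
  one_sub_ne_zero_of_norm_lt <| by
    rw [norm_pow]
    exact pow_lt_one₀ (norm_nonneg _) (norm_ofReal_lt_one hq0 hq1) i.succ_ne_zero

lemma one_sub_mul_pow_ne_zero {q : ℝ} (hq0 : 0 < q) (hq1 : q < 1) {t : ℂ} (ht : ‖t‖ < 1) (i : ℕ) :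
    1 - t * (q : ℂ) ^ i ≠ 0 :=
  one_sub_ne_zero_of_norm_lt <| by
    rw [norm_mul, norm_pow]
    exact mul_lt_one_of_nonneg_of_lt_one_left (norm_nonneg _) ht
      (pow_le_one₀ (norm_nonneg _) (norm_ofReal_lt_one hq0 hq1).le)

lemma rogersGamma_mul_eval {q : ℝ} {s t : ℂ} (hq : ∀ i : ℕ, 1 - (q : ℂ) ^ (i + 1) ≠ 0)
    (ht : ∀ i : ℕ, 1 - t * (q : ℂ) ^ i ≠ 0) (hs : s ≠ 0) (hst : s ^ 2 = t) (n : ℕ) :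
    (1 - t * (q : ℂ) ^ n) * (rogersGamma q t n * RogersA1 q t (n - 1) s) =
      s * (1 - (q : ℂ) ^ n) * RogersA1 q t n s := by
  cases n with
  | zero => simp [rogersGamma_zero]
  | succ n =>
    have h := RogersA1_eval_succ hq ht hs hst n
    have h₁ := ht n
    have h₂ := ht (n + 1)
    simp only [rogersGamma, Nat.add_sub_cancel]
    rw [← mul_assoc, mul_div_assoc', mul_comm (1 - t * (q : ℂ) ^ n), ← div_div,
      mul_div_cancel_left₀ _ h₂, div_mul_eq_mul_div, div_eq_iff h₁]
    linear_combination -(1 - (q : ℂ) ^ (n + 1)) * h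

/-- The factor `q^{n²/4} s^n`, written with `p = q^{1/4}`. -/
def gaussFactor (p s : ℂ) (n : ℕ) : ℂ := p ^ (n ^ 2) * s ^ n

lemma gaussFactor_succ (p s : ℂ) (n : ℕ) :
    gaussFactor p s (n + 1) = p * (p ^ 2) ^ n * s * gaussFactor p s n := by
  simp only [gaussFactor]
  ring

lemma gaussFactor_pred {p s : ℂ} (q t : ℂ) (n : ℕ) :
    rogersGamma q t n * gaussFactor p s (n - 1) * (s * (p ^ 2) ^ n) =
      rogersGamma q t n * p * gaussFactor p s n := by
  cases n with
  | zero => simp [rogersGamma_zero]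
  | succ n =>
    rw [gaussFactor_succ, Nat.add_sub_cancel]
    ring

lemma gaussFactor_recurrence {p q : ℝ} {s t : ℂ} (hp : (p : ℂ) ≠ 0) (hpq : p ^ 4 = q)
    (hq : ∀ i : ℕ, 1 - (q : ℂ) ^ (i + 1) ≠ 0)
    (ht : ∀ i : ℕ, 1 - t * (q : ℂ) ^ i ≠ 0) (hs : s ≠ 0) (hst : s ^ 2 = t) (n : ℕ) :
    gaussFactor p s (n + 1) * RogersA1 q t (n + 1) s =
      p * (t * ((p : ℂ) ^ 2) ^ n + ((p : ℂ) ^ 2)⁻¹ ^ n) * (gaussFactor p s n * RogersA1 q t n s) -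
        rogersGamma q t n * (gaussFactor p s (n - 1) * RogersA1 q t (n - 1) s) := by
  have h₁ := RogersA1_eval_succ hq ht hs hst n
  have h₂ := rogersGamma_mul_eval hq ht hs hst n
  have h₃ := gaussFactor_pred (p := p) (s := s) q t n
  have hw := ht n
  have hu : (q : ℂ) ^ n = (((p : ℂ) ^ 2) ^ n) ^ 2 := by
    rw [← hpq]
    push_cast
    ring
  have hu0 : ((p : ℂ) ^ 2) ^ n ≠ 0 := pow_ne_zero _ (pow_ne_zero _ hp)
  rw [gaussFactor_succ, inv_pow]
  rw [hu] at h₁ h₂ hw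
  generalize ((p : ℂ) ^ 2) ^ n = u at *
  refine mul_left_cancel₀ (mul_ne_zero (mul_ne_zero hw hs) hu0) ?_
  have huu : u * u⁻¹ = 1 := mul_inv_cancel₀ hu0
  linear_combination (s * u ^ 2 * p * gaussFactor p s n) * h₁ +
    (p * gaussFactor p s n) * h₂ + ((1 - t * u ^ 2) * RogersA1 q t (n - 1) s) * h₃ -
    (p * gaussFactor p s n * RogersA1 q t n s * s * (1 - t * u ^ 2)) * huu

lemma gaussFactor_recurrence_eval {p q : ℝ} {s t : ℂ} (hp : (p : ℂ) ≠ 0) (hpq : p ^ 4 = q)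
    (hq : ∀ i : ℕ, 1 - (q : ℂ) ^ (i + 1) ≠ 0)
    (ht : ∀ i : ℕ, 1 - t * (q : ℂ) ^ i ≠ 0) (hs : s ≠ 0) (hst : s ^ 2 = t) (m n : ℕ) :
    gaussFactor p s (m + 1) * gaussFactor p s n * RogersA1 q t n (s * ((p : ℂ) ^ 2) ^ (m + 1)) *
        RogersA1 q t (m + 1) s =
      gaussFactor p s m * gaussFactor p s (n + 1) * RogersA1 q t (n + 1) (s * ((p : ℂ) ^ 2) ^ m) *
          RogersA1 q t m s +
        rogersGamma q t n * (gaussFactor p s m * gaussFactor p s (n - 1) *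
          RogersA1 q t (n - 1) (s * ((p : ℂ) ^ 2) ^ m) * RogersA1 q t m s) -
        rogersGamma q t m * (gaussFactor p s (m - 1) * gaussFactor p s n *
          RogersA1 q t n (s * ((p : ℂ) ^ 2) ^ (m - 1)) * RogersA1 q t (m - 1) s) := by
  have hr : ((p : ℂ) ^ 2) ^ 2 = q := by
    rw [← hpq]
    push_cast
    ring
  have hr0 : (p : ℂ) ^ 2 ≠ 0 := pow_ne_zero _ hp
  have hu0 : ((p : ℂ) ^ 2) ^ m ≠ 0 := pow_ne_zero _ hr0
  have hv0 : ((p : ℂ) ^ 2) ^ n ≠ 0 := pow_ne_zero _ hr0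
  have h₁ := RogersA1_eval_succ hq ht hs hst m
  have h₂ := rogersGamma_mul_eval hq ht hs hst m
  have h₃ := gaussFactor_pred (p := p) (s := s) q t n
  have h₄ := gaussFactor_pred (p := p) (s := s) q t m
  have h₅ := (RogersA1_macdonald hq ht hr hr0 n (mul_ne_zero hs hu0)).2
  have h₆ : rogersGamma q t m * RogersA1 q t n (s * ((p : ℂ) ^ 2) ^ (m - 1)) =
      rogersGamma q t m * RogersA1 q t n (s * ((p : ℂ) ^ 2) ^ m / (p : ℂ) ^ 2) := by
    cases m with
    | zero => simp [rogersGamma_zero]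
    | succ m =>
      rw [Nat.add_sub_cancel, pow_succ ((p : ℂ) ^ 2) m, ← mul_assoc, mul_div_cancel_right₀ _ hr0]
  have hw := ht m
  have hu : (q : ℂ) ^ m = (((p : ℂ) ^ 2) ^ m) ^ 2 := by rw [← hr]; ring
  have e : s * ((p : ℂ) ^ 2) ^ (m + 1) = (p : ℂ) ^ 2 * (s * ((p : ℂ) ^ 2) ^ m) := by ring
  rw [gaussFactor_succ, gaussFactor_succ, e]
  rw [inv_pow] at h₅
  rw [hu] at h₁ h₂ hw
  generalize RogersA1 q t n ((p : ℂ) ^ 2 * (s * ((p : ℂ) ^ 2) ^ m)) = Pr at *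
  generalize RogersA1 q t n (s * ((p : ℂ) ^ 2) ^ m / (p : ℂ) ^ 2) = Pd at *
  generalize RogersA1 q t n (s * ((p : ℂ) ^ 2) ^ (m - 1)) = Pd' at *
  generalize RogersA1 q t (n + 1) (s * ((p : ℂ) ^ 2) ^ m) = Pu at *
  generalize RogersA1 q t (n - 1) (s * ((p : ℂ) ^ 2) ^ m) = Pl at *
  generalize ((p : ℂ) ^ 2) ^ m = u at *
  generalize ((p : ℂ) ^ 2) ^ n = v at *
  subst hst
  have h₃' : rogersGamma q (s ^ 2) n * gaussFactor p s (n - 1) =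
      rogersGamma q (s ^ 2) n * p * gaussFactor p s n / (s * v) :=
    (eq_div_iff (mul_ne_zero hs hv0)).mpr h₃
  have h₄' : rogersGamma q (s ^ 2) m * gaussFactor p s (m - 1) =
      rogersGamma q (s ^ 2) m * p * gaussFactor p s m / (s * u) :=
    (eq_div_iff (mul_ne_zero hs hu0)).mpr h₄
  refine mul_left_cancel₀ hw ?_
  linear_combination (norm := skip)
    (p * u * gaussFactor p s m * gaussFactor p s n * Pr) * h₁ +
    (p * gaussFactor p s m * gaussFactor p s n / (s * u) * Pd) * h₂ +
    ((1 - s ^ 2 * u ^ 2) * gaussFactor p s m * Pl * RogersA1 q (s ^ 2) m s) * -h₃' +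
    ((1 - s ^ 2 * u ^ 2) * gaussFactor p s n * Pd * RogersA1 q (s ^ 2) (m - 1) s) * h₄' +
    ((1 - s ^ 2 * u ^ 2) * gaussFactor p s n * gaussFactor p s (m - 1) *
      RogersA1 q (s ^ 2) (m - 1) s) * h₆ +
    (p * gaussFactor p s m * gaussFactor p s n * RogersA1 q (s ^ 2) m s / s) * h₅
  field_simp
  ring

section Integrals

variable {p q : ℝ} {s t : ℂ}

lemma gaussInt_RogersA1_succ (hp0 : 0 < p) (hp1 : p < 1) (hpq : p ^ 4 = q) (ht : ‖t‖ < 1)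
    (n : ℕ) :
    gaussInt q t (fun x => RogersA1 q t (n + 1) x) =
      p * (t * ((p : ℂ) ^ 2) ^ n + ((p : ℂ) ^ 2)⁻¹ ^ n) * gaussInt q t (fun x => RogersA1 q t n x) -
        rogersGamma q t n * gaussInt q t (fun x => RogersA1 q t (n - 1) x) := by
  have hq0 : 0 < q := hpq ▸ pow_pos hp0 4
  have hq1 : q < 1 := hpq ▸ pow_lt_one₀ hp0.le hp1 (by norm_num)
  have hp : (p : ℂ) ≠ 0 := by exact_mod_cast hp0.ne'
  have hr : ((p : ℂ) ^ 2) ^ 2 = q := by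
    rw [← hpq]
    push_cast
    ring
  have hr0 : (p : ℂ) ^ 2 ≠ 0 := pow_ne_zero _ hp
  have hq' := one_sub_pow_succ_ne_zero hq0 hq1
  have ht' := one_sub_mul_pow_ne_zero hq0 hq1 ht
  have hd (k : ℕ) (x : ℂ) (hx : x ≠ 0) : DifferentiableAt ℂ (fun x => RogersA1 q t k x) x :=
    differentiableAt_RogersA1 q t k differentiableAt_id hx
  have hdr (x : ℂ) (hx : x ≠ 0) :
      DifferentiableAt ℂ (fun x => RogersA1 q t n (x / (p : ℂ) ^ 2)) x :=
    differentiableAt_RogersA1 q t n (by fun_prop) (div_ne_zero hx hr0)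
  have hdx (x : ℂ) (hx : x ≠ 0) : DifferentiableAt ℂ (fun x => x * RogersA1 q t n x) x :=
    differentiableAt_id.mul (hd n x hx)
  have h₁ := gaussInt_id_mul hp0 hp1 hpq ht (hd n)
  have e₁ : (fun x : ℂ => RogersA1 q t n ((p : ℂ) ^ 2 / x)) =
      fun x => RogersA1 q t n (x / (p : ℂ) ^ 2) := by
    funext x
    rw [← RogersA1_inv, inv_div]
  rw [e₁] at h₁
  have h₂ := gaussInt_mul_eq_zero hq0 hq1 ht (k := fun x => RogersA1 q t n x)
    (fun x _ => RogersA1_inv q t n x)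
  have e₂ : gaussInt q t (fun x => (x⁻¹ - t * x) * RogersA1 q t n x) =
      gaussInt q t fun x => 1 * (1 * RogersA1 q t (n + 1) x +
        rogersGamma q t n * RogersA1 q t (n - 1) x) + -(1 + t) * (x * RogersA1 q t n x) := by
    refine gaussInt_congr fun x hx => ?_
    linear_combination RogersA1_recurrence hq' ht' n (ne_zero_of_norm_eq_one hx)
  rw [e₂, gaussInt_linear hq0 hq1 ht 1 _ (fun x hx => ((hd _ x hx).const_mul 1).fun_add
    ((hd _ x hx).const_mul _)) hdx, gaussInt_linear hq0 hq1 ht 1 _ (hd _) (hd _), h₁] at h₂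
  have h₃ : gaussInt q t (fun x => (t * ((p : ℂ) ^ 2) ^ n + ((p : ℂ) ^ 2)⁻¹ ^ n) *
      RogersA1 q t n x + -(1 + t) * RogersA1 q t n (x / (p : ℂ) ^ 2)) = 0 := by
    refine gaussInt_eq_zero hq0 hq1 ht (g := fun x => RogersA1 q t n ((p : ℂ) ^ 2 * x) -
      RogersA1 q t n (x / (p : ℂ) ^ 2)) (fun x _ => ?_) (fun x hx => ?_)
    · have e₃ : (p : ℂ) ^ 2 * x⁻¹ = (x / (p : ℂ) ^ 2)⁻¹ := by rw [inv_div, div_eq_mul_inv]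
      have e₄ : x⁻¹ / (p : ℂ) ^ 2 = ((p : ℂ) ^ 2 * x)⁻¹ := by
        rw [mul_inv, div_eq_mul_inv, mul_comm]
      simp only [e₃, e₄, RogersA1_inv, neg_sub]
    · linear_combination -(RogersA1_macdonald hq' ht' hr hr0 n (ne_zero_of_norm_eq_one hx)).1
  rw [gaussInt_linear hq0 hq1 ht _ _ (hd n) hdr] at h₃
  linear_combination h₂ - p * h₃

lemma gaussInt_RogersA1 (hp0 : 0 < p) (hp1 : p < 1) (hpq : p ^ 4 = q) (ht : ‖t‖ < 1)
    (hs : s ≠ 0) (hst : s ^ 2 = t) (n : ℕ) :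
    gaussInt q t (fun x => RogersA1 q t n x) =
      gaussFactor p s n * RogersA1 q t n s * gaussInt q t (fun _ => 1) := by
  have hq0 : 0 < q := hpq ▸ pow_pos hp0 4
  have hq1 : q < 1 := hpq ▸ pow_lt_one₀ hp0.le hp1 (by norm_num)
  have hp : (p : ℂ) ≠ 0 := by exact_mod_cast hp0.ne'
  induction n using Nat.strong_induction_on with
  | _ n ih =>
    cases n with
    | zero => simp [RogersA1_zero, gaussFactor]
    | succ n =>
      rw [gaussInt_RogersA1_succ hp0 hp1 hpq ht n, ih n (by omega), ih (n - 1) (by omega),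
        gaussFactor_recurrence hp hpq (one_sub_pow_succ_ne_zero hq0 hq1)
          (one_sub_mul_pow_ne_zero hq0 hq1 ht) hs hst n]
      ring

lemma gaussInt_RogersA1_mul_succ (hp0 : 0 < p) (hp1 : p < 1) (hpq : p ^ 4 = q) (ht : ‖t‖ < 1)
    (m n : ℕ) :
    gaussInt q t (fun x => RogersA1 q t (m + 1) x * RogersA1 q t n x) =
      gaussInt q t (fun x => RogersA1 q t m x * RogersA1 q t (n + 1) x) +
        rogersGamma q t n * gaussInt q t (fun x => RogersA1 q t m x * RogersA1 q t (n - 1) x) -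
        rogersGamma q t m * gaussInt q t (fun x => RogersA1 q t (m - 1) x * RogersA1 q t n x) := by
  have hq0 : 0 < q := hpq ▸ pow_pos hp0 4
  have hq1 : q < 1 := hpq ▸ pow_lt_one₀ hp0.le hp1 (by norm_num)
  have hq' := one_sub_pow_succ_ne_zero hq0 hq1
  have ht' := one_sub_mul_pow_ne_zero hq0 hq1 ht
  have hd (j k : ℕ) (x : ℂ) (hx : x ≠ 0) :
      DifferentiableAt ℂ (fun x => RogersA1 q t j x * RogersA1 q t k x) x :=
    (differentiableAt_RogersA1 q t j differentiableAt_id hx).mul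
      (differentiableAt_RogersA1 q t k differentiableAt_id hx)
  have h : gaussInt q t (fun x => 1 * (RogersA1 q t (m + 1) x * RogersA1 q t n x) +
        rogersGamma q t m * (RogersA1 q t (m - 1) x * RogersA1 q t n x)) =
      gaussInt q t (fun x => 1 * (RogersA1 q t m x * RogersA1 q t (n + 1) x) +
        rogersGamma q t n * (RogersA1 q t m x * RogersA1 q t (n - 1) x)) := by
    refine gaussInt_congr fun x hx => ?_
    have hx := ne_zero_of_norm_eq_one hx
    linear_combination RogersA1 q t m x * RogersA1_recurrence hq' ht' n hx -
      RogersA1 q t n x * RogersA1_recurrence hq' ht' m hx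
  rw [gaussInt_linear hq0 hq1 ht _ _ (hd _ _) (hd _ _),
    gaussInt_linear hq0 hq1 ht _ _ (hd _ _) (hd _ _)] at h
  linear_combination h

lemma gaussInt_RogersA1_mul (hp0 : 0 < p) (hp1 : p < 1) (hpq : p ^ 4 = q) (ht : ‖t‖ < 1)
    (hs : s ≠ 0) (hst : s ^ 2 = t) (m n : ℕ) :
    gaussInt q t (fun x => RogersA1 q t m x * RogersA1 q t n x) =
      gaussFactor p s m * gaussFactor p s n * RogersA1 q t n (s * ((p : ℂ) ^ 2) ^ m) *
        RogersA1 q t m s * gaussInt q t (fun _ => 1) := by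
  have hq0 : 0 < q := hpq ▸ pow_pos hp0 4
  have hq1 : q < 1 := hpq ▸ pow_lt_one₀ hp0.le hp1 (by norm_num)
  have hp : (p : ℂ) ≠ 0 := by exact_mod_cast hp0.ne'
  induction m using Nat.strong_induction_on generalizing n with
  | _ m ih =>
    cases m with
    | zero =>
      have := gaussInt_RogersA1 hp0 hp1 hpq ht hs hst n
      simpa [RogersA1_zero, gaussFactor] using this
    | succ m =>
      rw [gaussInt_RogersA1_mul_succ hp0 hp1 hpq ht m n, ih m (by omega), ih m (by omega),
        ih (m - 1) (by omega), gaussFactor_recurrence_eval hp hpq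
          (one_sub_pow_succ_ne_zero hq0 hq1) (one_sub_mul_pow_ne_zero hq0 hq1 ht) hs hst m n]
      ring

end Integrals

lemma tprod_eq_qPochInf_div {q : ℝ} (hq0 : 0 < q) (hq1 : q < 1) {t : ℂ} (ht : ‖t‖ < 1) :
    ∏' j : ℕ, (1 - t * (q : ℂ) ^ (j + 1)) / (1 - t ^ 2 * (q : ℂ) ^ (j + 1)) =
      qPochInf q (t * q) / qPochInf q (t ^ 2 * q) := by
  have hq := norm_ofReal_lt_one hq0 hq1
  have ht2 : ‖t ^ 2‖ < 1 := by
    rw [norm_pow]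
    exact pow_lt_one₀ (norm_nonneg _) ht two_ne_zero
  have e : ∀ (a : ℂ) (j : ℕ), a * (q : ℂ) ^ (j + 1) = a * q * q ^ j := fun a j => by ring
  simp only [e]
  exact (multipliable_qPochInf hq _).tprod_div₀ (multipliable_qPochInf hq _)
    (qPochInf_ne_zero hq (norm_mul_ofReal_lt_one hq0 hq1 ht2))

/-- the q-Gauss integral formula for Rogers polynomials of type A₁. -/
theorem rogersA1_qGauss_integral (q s : ℝ) (hq0 : 0 < q) (hq1 : q < 1)
    (hs0 : 0 < s) (hs1 : s < 1) (m n : ℕ) :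
    (1 / (2 * (Real.pi : ℂ))) *
      ∫ φ : ℝ in (0:ℝ)..(2 * Real.pi),
        RogersA1 q ((s : ℂ) ^ 2) m (Complex.exp (Complex.I * (φ : ℂ))) *
          RogersA1 q ((s : ℂ) ^ 2) n (Complex.exp (Complex.I * (φ : ℂ))) *
          thetaA1 q (Complex.exp (Complex.I * (φ : ℂ))) *
          muA1 q ((s : ℂ) ^ 2) (Complex.exp (Complex.I * (φ : ℂ))) =
    ((q ^ (((m : ℝ) ^ 2 + (n : ℝ) ^ 2) / 4) : ℝ) : ℂ) * (s : ℂ) ^ (m + n) *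
      RogersA1 q ((s : ℂ) ^ 2) n ((s : ℂ) * ((q ^ ((m : ℝ) / 2) : ℝ) : ℂ)) *
      RogersA1 q ((s : ℂ) ^ 2) m (s : ℂ) *
      ∏' j : ℕ, (1 - (s : ℂ) ^ 2 * (q : ℂ) ^ (j + 1)) /
        (1 - ((s : ℂ) ^ 2) ^ 2 * (q : ℂ) ^ (j + 1)) := by
  obtain ⟨p, hp0, hp1, hpq⟩ : ∃ p : ℝ, 0 < p ∧ p < 1 ∧ p ^ 4 = q :=
    ⟨q ^ (1 / 4 : ℝ), Real.rpow_pos_of_pos hq0 _, Real.rpow_lt_one hq0.le hq1 (by norm_num), by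
      rw [← Real.rpow_natCast, ← Real.rpow_mul hq0.le]
      norm_num⟩
  have hpow (k : ℕ) : q ^ ((k : ℝ) / 4) = p ^ k := by
    rw [← hpq, ← Real.rpow_natCast, ← Real.rpow_mul hp0.le, ← Real.rpow_natCast]
    congr 1
    push_cast
    ring
  have hexp₁ : q ^ (((m : ℝ) ^ 2 + (n : ℝ) ^ 2) / 4) = p ^ (m ^ 2 + n ^ 2) := by
    rw [← hpow]
    push_cast
    rfl
  have hexp₂ : q ^ ((m : ℝ) / 2) = (p ^ 2) ^ m := by
    rw [← pow_mul, ← hpow]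
    congr 1
    push_cast
    ring
  have hq := norm_ofReal_lt_one hq0 hq1
  have hs : (s : ℂ) ≠ 0 := by exact_mod_cast hs0.ne'
  have ht : ‖(s : ℂ) ^ 2‖ < 1 := by
    rw [norm_pow]
    exact pow_lt_one₀ (norm_nonneg _) (norm_ofReal_lt_one hs0 hs1) two_ne_zero
  have ht2 : ‖((s : ℂ) ^ 2) ^ 2‖ < 1 := by
    rw [norm_pow]
    exact pow_lt_one₀ (norm_nonneg _) ht two_ne_zero
  have hmass := normalizedMass_eq hp0 hp1 hpq ht
  have hd₁ := qPochInf_ne_zero hq (norm_mul_ofReal_lt_one hq0 hq1 ht)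
  have hd₂ := qPochInf_ne_zero hq (norm_mul_ofReal_lt_one hq0 hq1 ht2)
  rw [normalizedMass, div_eq_iff hd₁] at hmass
  have hmain := gaussInt_RogersA1_mul hp0 hp1 hpq ht hs rfl m n
  simp only [gaussInt, circInt] at hmain hmass
  have hpi : (Real.pi : ℂ) ≠ 0 := by exact_mod_cast Real.pi_ne_zero
  rw [hmain, hexp₁, hexp₂, tprod_eq_qPochInf_div hq0 hq1 ht, mul_div_assoc', eq_div_iff hd₂]
  simp only [gaussFactor]
  push_cast
  linear_combination (norm := skip) (1 / (2 * (Real.pi : ℂ)) * (p : ℂ) ^ (m ^ 2 + n ^ 2) *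
    (s : ℂ) ^ (m + n) * RogersA1 q ((s : ℂ) ^ 2) n ((s : ℂ) * ((p : ℂ) ^ 2) ^ m) *
    RogersA1 q ((s : ℂ) ^ 2) m s) * hmass
  field_simp
  ring

end
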